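/- arXiv:1206.3787 — 2 statements merged into one kernel-verified Lean document; each statement's English description precedes it below -/
import Mathlib

section
/- Fix a₊, a₋ > 0 and set α = 2π/(a₊a₋). Define recursively, for x, y ∈ ℝ^N: J₁(x,y) = exp(iαxy), and for N ≥ 2, J_N(x,y) = (exp(iα y_N (x₁+⋯+x_N))/(N−1)!) · ∫_{ℝ^{N−1}} ∏_{1≤j<k≤N−1} 4 sinh²(π(z_j−z_k)/a₋) · ∏_{j=1}^{N} ∏_{k=1}^{N−1} (1/(2 cosh(π(x_j−z_k)/a₋))) · J_{N−1}(z,(y₁−y_N,…,y_{N−1}−y_N)) dz. Then for every N ≥ 1 all these integrals converge absolutely, and for all x, y ∈ ℝ^N with x_j ≠ x_k and y_j ≠ y_k for all 1 ≤ j < k ≤ N one has J_N(x,y) = ∏_{1≤j<k≤N} ( −i a₋ / (4 sinh(π(x_j−x_k)/a₋) sinh(π(y_j−y_k)/a₊)) ) · Σ_{σ∈S_N} sgn(σ) · exp(iα Σ_{j=1}^{N} x_j y_{σ(j)}). -/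
open MeasureTheory Complex

/-- `α = 2π/(a₊a₋)`. -/
noncomputable def alphaPar (ap am : ℝ) : ℝ := 2 * Real.pi / (ap * am)

/-- The recursively defined joint eigenfunctions `J_N` in the free case `b = a₊`:
`J₁(x,y) = exp(iαxy)` and, for `N ≥ 2`,
`J_N(x,y) = (exp(iα y_N(x₁+⋯+x_N))/(N−1)!) ∫_{ℝ^{N−1}} ∏_{j<k} 4 sinh²(π(z_j−z_k)/a₋)
  ∏_{j,k} (2 cosh(π(x_j−z_k)/a₋))⁻¹ J_{N−1}(z,(y₁−y_N,…,y_{N−1}−y_N)) dz`. -/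
noncomputable def Jfree (ap am : ℝ) : (N : ℕ) → (Fin N → ℝ) → (Fin N → ℝ) → ℂ
  | 0, _, _ => 1
  | 1, x, y => Complex.exp (Complex.I * (alphaPar ap am : ℂ) * (x 0 : ℂ) * (y 0 : ℂ))
  | (N + 2), x, y =>
      (Complex.exp (Complex.I * (alphaPar ap am : ℂ) * (y (Fin.last (N + 1)) : ℂ) *
          ∑ j : Fin (N + 2), (x j : ℂ)) / (Nat.factorial (N + 1) : ℂ)) *
        ∫ z : Fin (N + 1) → ℝ,
          (∏ q ∈ Finset.univ.filter (fun q : Fin (N + 1) × Fin (N + 1) => q.1 < q.2),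
            ((4 * Real.sinh (Real.pi * (z q.1 - z q.2) / am) ^ 2 : ℝ) : ℂ)) *
          (∏ j : Fin (N + 2), ∏ k : Fin (N + 1),
            ((1 / (2 * Real.cosh (Real.pi * (x j - z k) / am)) : ℝ) : ℂ)) *
          Jfree ap am (N + 1) z
            (fun j => y (Fin.castSucc j) - y (Fin.last (N + 1)))

/-!
After multiplication by the hyperbolic Vandermonde product `∏_{j<k} 2 sinh(π(x_j - x_k)/a₋)` the
recursion becomes an integral transform between such normalised functions, whose kernel is, by
Cauchy's determinant identity, the determinant of differences of logistic functions
`(x_j, z_k) ↦ σ(2π(x_j - z_k)/a₋) - σ(2π(x_N - z_k)/a₋)`. Andréief's identity turns the integral of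
this determinant against a determinant of plane waves into the determinant of one-dimensional
Fourier transforms, and these are values of the Beta function. Subtracting the last row of the
plane-wave determinant, which is the effect of passing to `y_j - y_N`, closes the induction.

For absolute convergence, the determinant kernel decays exponentially in `z` while growing as
slowly as desired in `x`, so by induction the normalised functions grow more slowly than every
exponential; this settles distinct `x_j`. Changing `x` alters the product of the `1 / cosh` only by
a factor bounded in `z`, which reduces coinciding `x_j` to that case.
-/

/-! ### Determinants -/

/-- The pairs `j < k` of indices, over which the products of the theorem run. -/
abbrev ltPairs (n : ℕ) : Finset (Fin n × Fin n) := {q | q.1 < q.2}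

lemma prod_ltPairs_succ {M : Type*} [CommMonoid M] {n : ℕ}
    (f : Fin (n + 1) → Fin (n + 1) → M) :
    ∏ q ∈ ltPairs (n + 1), f q.1 q.2 =
      (∏ q ∈ ltPairs n, f q.1.castSucc q.2.castSucc) * ∏ j : Fin n, f j.castSucc (Fin.last n) := by
  simp only [Finset.prod_filter, Fintype.prod_prod_type, Fin.prod_univ_castSucc,
    Fin.castSucc_lt_castSucc_iff, Fin.castSucc_lt_last, (Fin.le_last _).not_gt, if_true, if_false,
    Finset.prod_mul_distrib, Finset.prod_const_one, mul_one]

lemma det_eq_last_mul_det_schur {K : Type*} [Field K] {n : ℕ}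
    (A : Matrix (Fin (n + 1)) (Fin (n + 1)) K) (hA : A (Fin.last n) (Fin.last n) ≠ 0) :
    A.det = A (Fin.last n) (Fin.last n) * (Matrix.of fun j k : Fin n =>
      A j.castSucc k.castSucc - A j.castSucc (Fin.last n) / A (Fin.last n) (Fin.last n) *
        A (Fin.last n) k.castSucc).det := by
  let c : Fin (n + 1) → K :=
    Fin.snoc (fun j => A j.castSucc (Fin.last n) / A (Fin.last n) (Fin.last n)) 0
  let B : Matrix (Fin (n + 1)) (Fin (n + 1)) K :=
    Matrix.of fun i j => A i j - c i * A (Fin.last n) j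
  have det_eq : A.det = B.det :=
    Matrix.det_eq_of_forall_row_eq_smul_add_const c (Fin.last n) (by simp [c]) (by simp [B, c])
  have last_column (i : Fin n) : B i.castSucc (Fin.last n) = 0 := by simp [B, c, hA]
  rw [det_eq, Matrix.det_succ_column B (Fin.last n), Fin.sum_univ_castSucc]
  simp only [last_column, mul_zero, zero_mul, Finset.sum_const_zero, zero_add]
  simp [B, c, Matrix.submatrix, Even.neg_one_pow (Even.add_self n)]

section ScaledDeterminants

variable {ι R : Type*} [Fintype ι] [DecidableEq ι] [CommRing R]

lemma det_of_mul_column (r : ι → R) (A : ι → ι → R) :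
    (Matrix.of fun j k => r j * A j k).det = (∏ j, r j) * (Matrix.of A).det :=
  Matrix.det_mul_column r (Matrix.of A)

lemma det_of_mul_row (s : ι → R) (A : ι → ι → R) :
    (Matrix.of fun j k => s k * A j k).det = (∏ k, s k) * (Matrix.of A).det :=
  Matrix.det_mul_row s (Matrix.of A)

end ScaledDeterminants

section SinhCosh

variable {n : ℕ} {ι κ : Type*} [Fintype ι] [Fintype κ]

/-- The hyperbolic Vandermonde product `∏_{j<k} 2 sinh(c(x_j - x_k))`, whose square is the weight
function of the recursion when `c = π / a₋`. -/
noncomputable def sinhVandermonde (c : ℝ) (x : Fin n → ℝ) : ℝ :=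
  ∏ q ∈ ltPairs n, 2 * Real.sinh (c * (x q.1 - x q.2))

/-- The kernel function `∏_{j,k} 1 / (2 cosh(c(x_j - z_k)))` of the recursion, where
`c = π / a₋`. -/
noncomputable def sechKernel (c : ℝ) (x : ι → ℝ) (z : κ → ℝ) : ℝ :=
  ∏ j, ∏ k, 1 / (2 * Real.cosh (c * (x j - z k)))

/-- The difference of two logistic steps, at `u` and at `v`; as a function of `t` it decays
exponentially. -/
noncomputable def sigmoidBump (c u v t : ℝ) : ℝ :=
  Real.sigmoid (2 * c * (u - t)) - Real.sigmoid (2 * c * (v - t))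

/-- The square matrix of the bumps at `t = z_k` between `x_j` and the last `x`. -/
noncomputable def bumpMatrix (c : ℝ) (x : Fin (n + 1) → ℝ) (z : Fin n → ℝ) :
    Matrix (Fin n) (Fin n) ℝ :=
  Matrix.of fun j k => sigmoidBump c (x j.castSucc) (x (Fin.last n)) (z k)

lemma sinhVandermonde_zero (c : ℝ) (x : Fin 0 → ℝ) : sinhVandermonde c x = 1 :=
  Finset.prod_eq_one fun q _ => q.1.elim0

lemma sinhVandermonde_succ (c : ℝ) (x : Fin (n + 1) → ℝ) :
    sinhVandermonde c x = sinhVandermonde c (fun j => x j.castSucc) *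
      ∏ j : Fin n, 2 * Real.sinh (c * (x j.castSucc - x (Fin.last n))) :=
  prod_ltPairs_succ fun j k => 2 * Real.sinh (c * (x j - x k))

lemma sinhVandermonde_ne_zero {c : ℝ} (hc : c ≠ 0) {x : Fin n → ℝ} (hx : Function.Injective x) :
    sinhVandermonde c x ≠ 0 := by
  refine Finset.prod_ne_zero_iff.mpr fun q hq => ?_
  have : x q.1 ≠ x q.2 := hx.ne (Finset.mem_filter.mp hq).2.ne
  simpa [hc, sub_eq_zero] using this

lemma sechKernel_pos (c : ℝ) (x : ι → ℝ) (z : κ → ℝ) : 0 < sechKernel c x z :=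
  Finset.prod_pos fun j _ => Finset.prod_pos fun k _ => by
    have := Real.cosh_pos (c * (x j - z k)); positivity

lemma sech_sub_sech_mul_sech_div_sech (c a a' b b' : ℝ) :
    1 / (2 * Real.cosh (c * (a - b))) -
        1 / (2 * Real.cosh (c * (a - b'))) / (1 / (2 * Real.cosh (c * (a' - b')))) *
          (1 / (2 * Real.cosh (c * (a' - b)))) =
      2 * Real.sinh (c * (a - a')) / (2 * Real.cosh (c * (a - b'))) *
        (2 * Real.sinh (c * (b - b')) / (2 * Real.cosh (c * (a' - b))) *
          (1 / (2 * Real.cosh (c * (a - b))))) := by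
  have addition_formula :
      Real.cosh (c * (a - b')) * Real.cosh (c * (a' - b)) -
          Real.cosh (c * (a - b)) * Real.cosh (c * (a' - b')) =
        Real.sinh (c * (a - a')) * Real.sinh (c * (b - b')) := by
    simp only [mul_sub, Real.cosh_sub, Real.sinh_sub]
    ring
  have cosh_ne_zero (t : ℝ) : Real.cosh t ≠ 0 := (Real.cosh_pos t).ne'
  field_simp [cosh_ne_zero]
  linear_combination addition_formula

theorem det_sech_eq (c : ℝ) (x z : Fin n → ℝ) :
    (Matrix.of fun j k => 1 / (2 * Real.cosh (c * (x j - z k)))).det =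
      sinhVandermonde c x * sinhVandermonde c z * sechKernel c x z := by
  induction n with
  | zero => simp [sinhVandermonde_zero, sechKernel]
  | succ n ih =>
    have cosh_ne_zero (t : ℝ) : Real.cosh t ≠ 0 := (Real.cosh_pos t).ne'
    rw [det_eq_last_mul_det_schur _ (by simp [cosh_ne_zero])]
    simp only [Matrix.of_apply, sech_sub_sech_mul_sech_div_sech]
    rw [det_of_mul_column, det_of_mul_row, ih (fun j => x j.castSucc) (fun k => z k.castSucc),
      sinhVandermonde_succ c x, sinhVandermonde_succ c z]
    simp only [sechKernel, Fin.prod_univ_castSucc, Finset.prod_mul_distrib,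
      Finset.prod_div_distrib, Finset.prod_const_one]
    ring

lemma sigmoid_two_mul_sub (u v : ℝ) :
    Real.sigmoid (2 * u) - Real.sigmoid (2 * v) =
      2 * Real.sinh (u - v) * (1 / (2 * Real.cosh v) * (1 / (2 * Real.cosh u))) := by
  have sigmoid_eq (t : ℝ) : Real.sigmoid (2 * t) = Real.exp t / (2 * Real.cosh t) := by
    rw [Real.sigmoid_def, Real.cosh_eq, inv_eq_one_div, div_eq_div_iff (by positivity)
      (by positivity), mul_add, ← Real.exp_add]
    ring_nf
  have cosh_ne_zero (t : ℝ) : Real.cosh t ≠ 0 := (Real.cosh_pos t).ne'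
  rw [sigmoid_eq, sigmoid_eq]
  field_simp [cosh_ne_zero]
  rw [Real.sinh_sub, ← Real.cosh_add_sinh u, ← Real.cosh_add_sinh v]
  ring

lemma sigmoidBump_eq (c u v t : ℝ) :
    sigmoidBump c u v t = 2 * Real.sinh (c * (u - v)) *
      (1 / (2 * Real.cosh (c * (v - t))) * (1 / (2 * Real.cosh (c * (u - t))))) := by
  rw [sigmoidBump, mul_assoc, mul_assoc, sigmoid_two_mul_sub, ← mul_sub, sub_sub_sub_cancel_right]

theorem det_bumpMatrix_eq (c : ℝ) (x : Fin (n + 1) → ℝ) (z : Fin n → ℝ) :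
    (bumpMatrix c x z).det = sinhVandermonde c x * sinhVandermonde c z * sechKernel c x z := by
  simp only [bumpMatrix, sigmoidBump_eq]
  rw [det_of_mul_column, det_of_mul_row, det_sech_eq c (fun j => x j.castSucc),
    sinhVandermonde_succ c x]
  simp only [sechKernel, Fin.prod_univ_castSucc]
  ring

end SinhCosh

section Andreief

variable {ι 𝕜 X : Type*} [Fintype ι] [DecidableEq ι] [RCLike 𝕜]

lemma prod_mul_det_eq_sum (f g : ι → X → 𝕜) (τ : Equiv.Perm ι) (z : ι → X) :
    (∏ k, g (τ k) (z k)) * (Matrix.of fun j k => f j (z k)).det =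
      ∑ σ : Equiv.Perm ι, ((Equiv.Perm.sign σ : ℤ) : 𝕜) *
        ∏ k, f (σ k) (z k) * g (τ k) (z k) := by
  simp only [Matrix.det_apply', Matrix.of_apply, Finset.mul_sum, Finset.prod_mul_distrib]
  exact Finset.sum_congr rfl fun σ _ => by ring

variable [MeasurableSpace X] {μ : Measure X} [SigmaFinite μ] {f g : ι → X → 𝕜}

lemma integrable_sign_mul_prod (hfg : ∀ j k, Integrable (fun t => f j t * g k t) μ)
    (σ τ : Equiv.Perm ι) :
    Integrable (fun z : ι → X =>
      ((Equiv.Perm.sign σ : ℤ) : 𝕜) * ∏ k, f (σ k) (z k) * g (τ k) (z k))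
      (Measure.pi fun _ => μ) :=
  (Integrable.fintype_prod (f := fun k t => f (σ k) t * g (τ k) t)
    fun k => hfg (σ k) (τ k)).const_mul _

lemma integrable_prod_mul_det (hfg : ∀ j k, Integrable (fun t => f j t * g k t) μ)
    (τ : Equiv.Perm ι) :
    Integrable (fun z : ι → X => (∏ k, g (τ k) (z k)) * (Matrix.of fun j k => f j (z k)).det)
      (Measure.pi fun _ => μ) := by
  simp_rw [prod_mul_det_eq_sum f g τ]
  exact integrable_finsetSum _ fun σ _ => integrable_sign_mul_prod hfg σ τ

lemma integral_prod_mul_det (hfg : ∀ j k, Integrable (fun t => f j t * g k t) μ)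
    (τ : Equiv.Perm ι) :
    ∫ z : ι → X, (∏ k, g (τ k) (z k)) * (Matrix.of fun j k => f j (z k)).det
        ∂(Measure.pi fun _ => μ) =
      ((Equiv.Perm.sign τ : ℤ) : 𝕜) * (Matrix.of fun j k => ∫ t, f j t * g k t ∂μ).det := by
  simp_rw [prod_mul_det_eq_sum f g τ]
  rw [integral_finsetSum _ fun σ _ => integrable_sign_mul_prod hfg σ τ, ← Matrix.det_permute',
    Matrix.det_apply']
  refine Finset.sum_congr rfl fun σ _ => ?_
  rw [integral_const_mul, integral_fintype_prod_eq_prod fun k t => f (σ k) t * g (τ k) t]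
  rfl

theorem integral_det_mul_det (hfg : ∀ j k, Integrable (fun t => f j t * g k t) μ) :
    ∫ z : ι → X, (Matrix.of fun j k => f j (z k)).det * (Matrix.of fun j k => g k (z j)).det
        ∂(Measure.pi fun _ => μ) =
      (Fintype.card ι).factorial * (Matrix.of fun j k => ∫ t, f j t * g k t ∂μ).det := by
  have expand (z : ι → X) :
      (Matrix.of fun j k => f j (z k)).det * (Matrix.of fun j k => g k (z j)).det =
        ∑ τ : Equiv.Perm ι, ((Equiv.Perm.sign τ : ℤ) : 𝕜) *
          ((∏ k, g (τ k) (z k)) * (Matrix.of fun j k => f j (z k)).det) := by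
    rw [mul_comm, ← Matrix.det_transpose, Matrix.det_apply', Finset.sum_mul]
    exact Finset.sum_congr rfl fun τ _ => mul_assoc _ _ _
  have sign_mul_sign_mul (τ : Equiv.Perm ι) (a : 𝕜) :
      ((Equiv.Perm.sign τ : ℤ) : 𝕜) * (((Equiv.Perm.sign τ : ℤ) : 𝕜) * a) = a := by
    rw [← mul_assoc, ← Int.cast_mul, Int.units_coe_mul_self, Int.cast_one, one_mul]
  simp_rw [expand]
  rw [integral_finsetSum _ fun τ _ => (integrable_prod_mul_det hfg τ).const_mul _]
  simp only [integral_const_mul, integral_prod_mul_det hfg, sign_mul_sign_mul, Finset.sum_const,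
    Finset.card_univ, Fintype.card_perm, nsmul_eq_mul]

end Andreief

/-! ### The Fourier transform of a difference of logistic steps -/

section Fourier

lemma integrable_exp_neg_mul_abs {δ : ℝ} (hδ : 0 < δ) :
    Integrable fun t : ℝ => Real.exp (-(δ * |t|)) := by
  rw [← integrableOn_univ, ← Set.Iic_union_Ioi (a := (0 : ℝ))]
  refine IntegrableOn.union ?_ ?_
  · refine (integrableOn_exp_mul_Iic hδ 0).congr_fun (fun t ht => ?_) measurableSet_Iic
    simp [abs_of_nonpos (Set.mem_Iic.mp ht)]
  · refine (integrableOn_exp_mul_Ioi (neg_lt_zero.mpr hδ) 0).congr_fun (fun t ht => ?_)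
      measurableSet_Ioi
    simp [abs_of_pos (Set.mem_Ioi.mp ht)]

lemma abs_two_mul_sinh_le (t : ℝ) : |2 * Real.sinh t| ≤ Real.exp |t| := by
  rw [abs_mul, abs_two, Real.abs_sinh, Real.sinh_eq]
  linarith [Real.exp_pos (-|t|)]

lemma one_div_two_mul_cosh_le (t : ℝ) : 1 / (2 * Real.cosh t) ≤ Real.exp (-|t|) := by
  rw [one_div, Real.exp_neg]
  gcongr
  rw [Real.cosh_eq]
  linarith [Real.exp_abs_le t]

/-- The exponent `s` is free below the true decay rate `2 c`: a small `s` buys slow growth in `u`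
and `v` at the price of slow decay in `t`. -/
lemma abs_sigmoidBump_le {c s : ℝ} (hs : 0 ≤ s) (hsc : s ≤ 2 * c) (u v t : ℝ) :
    |sigmoidBump c u v t| ≤ Real.exp (s * (|u| + |v| - |t|)) := by
  have hc : 0 ≤ c := by linarith
  have exponent_nonpos : |u - v| - |v - t| - |u - t| ≤ 0 := by
    linarith [abs_sub_le u t v, abs_sub_comm v t]
  have exponent_le : |u - v| - |v - t| - |u - t| ≤ 2 * (|u| + |v| - |t|) := by
    linarith [abs_sub u v, abs_sub_abs_le_abs_sub t v, abs_sub_comm v t,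
      abs_sub_abs_le_abs_sub t u, abs_sub_comm u t]
  calc |sigmoidBump c u v t|
      = |2 * Real.sinh (c * (u - v))| *
          (1 / (2 * Real.cosh (c * (v - t))) * (1 / (2 * Real.cosh (c * (u - t))))) := by
        rw [sigmoidBump_eq, abs_mul, abs_of_nonneg (a := _ * (1 / _))]
        have := Real.cosh_pos (c * (v - t))
        have := Real.cosh_pos (c * (u - t))
        positivity
    _ ≤ Real.exp |c * (u - v)| * (Real.exp (-|c * (v - t)|) * Real.exp (-|c * (u - t)|)) := by
        have := Real.cosh_pos (c * (u - t))
        gcongr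
        · exact abs_two_mul_sinh_le _
        · exact one_div_two_mul_cosh_le _
        · exact one_div_two_mul_cosh_le _
    _ = Real.exp (c * (|u - v| - |v - t| - |u - t|)) := by
        rw [← Real.exp_add, ← Real.exp_add, abs_mul, abs_mul, abs_mul, abs_of_nonneg hc]
        ring_nf
    _ ≤ Real.exp (s * (|u| + |v| - |t|)) := by
        rw [Real.exp_le_exp]
        linarith [mul_nonneg (sub_nonneg.mpr hsc) (neg_nonneg.mpr exponent_nonpos),
          mul_le_mul_of_nonneg_left exponent_le hs]

lemma continuous_sigmoidBump (c u v : ℝ) : Continuous (sigmoidBump c u v) := by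
  have := continuous_sigmoid
  unfold sigmoidBump
  fun_prop

lemma integrable_sigmoidBump {c : ℝ} (hc : 0 < c) (u v : ℝ) : Integrable (sigmoidBump c u v) := by
  refine ((integrable_exp_neg_mul_abs (δ := 2 * c) (by positivity)).const_mul
    (Real.exp (2 * c * (|u| + |v|)))).mono' (continuous_sigmoidBump c u v).aestronglyMeasurable
    (.of_forall fun t => ?_)
  rw [Real.norm_eq_abs, ← Real.exp_add, ← sub_eq_add_neg, ← mul_sub]
  exact abs_sigmoidBump_le (by positivity) le_rfl u v t

lemma integrable_ofReal_mul_cexp {f : ℝ → ℝ} (hf : Integrable f) (k : ℝ) :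
    Integrable fun t : ℝ => (f t : ℂ) * cexp (I * k * t) := by
  refine hf.ofReal.mul_bdd (c := 1) (Continuous.aestronglyMeasurable (by fun_prop))
    (.of_forall fun t => ?_)
  rw [mul_assoc, ← ofReal_mul, norm_exp_I_mul_ofReal]

/-- The density of the logistic distribution, that is, the derivative of the sigmoid. -/
noncomputable def logisticDensity (t : ℝ) : ℝ := Real.sigmoid t * (1 - Real.sigmoid t)

lemma logisticDensity_pos (t : ℝ) : 0 < logisticDensity t :=
  mul_pos (Real.sigmoid_pos t) (sub_pos.mpr (Real.sigmoid_lt_one t))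

lemma logisticDensity_neg (t : ℝ) : logisticDensity (-t) = logisticDensity t := by
  rw [logisticDensity, logisticDensity, Real.sigmoid_neg]
  ring

lemma logisticDensity_le_exp (t : ℝ) : logisticDensity t ≤ Real.exp t := by
  have sigmoid_eq : Real.sigmoid t = (1 - Real.sigmoid t) * Real.exp t := by
    rw [← Real.sigmoid_neg, ← Real.sigmoid_mul_rexp_neg, mul_assoc, ← Real.exp_add, neg_add_cancel,
      Real.exp_zero, mul_one]
  calc logisticDensity t ≤ Real.sigmoid t :=
        mul_le_of_le_one_right (Real.sigmoid_nonneg t) (sub_le_self _ (Real.sigmoid_nonneg t))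
    _ = (1 - Real.sigmoid t) * Real.exp t := sigmoid_eq
    _ ≤ Real.exp t :=
        mul_le_of_le_one_left (Real.exp_nonneg t) (sub_le_self _ (Real.sigmoid_nonneg t))

lemma integrable_logisticDensity : Integrable logisticDensity := by
  have := continuous_sigmoid
  refine (integrable_exp_neg_mul_abs one_pos).mono'
    (Continuous.aestronglyMeasurable (by unfold logisticDensity; fun_prop))
    (.of_forall fun t => ?_)
  rw [Real.norm_eq_abs, abs_of_pos (logisticDensity_pos t), one_mul]
  rcases abs_choice t with ht | ht
  · rw [ht, ← logisticDensity_neg]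
    exact logisticDensity_le_exp (-t)
  · rw [ht, neg_neg]
    exact logisticDensity_le_exp t

lemma sigmoid_cpow_mul_one_sub_sigmoid_cpow (a : ℂ) (t : ℝ) :
    (Real.sigmoid t : ℂ) ^ a * (1 - (Real.sigmoid t : ℂ)) ^ (-a) = cexp (a * t) := by
  have sigmoid_pos := Real.sigmoid_pos t
  have neg_pos := Real.sigmoid_pos (-t)
  have log_neg : Real.log (Real.sigmoid (-t)) = Real.log (Real.sigmoid t) - t := by
    rw [← Real.sigmoid_mul_rexp_neg, Real.log_mul sigmoid_pos.ne' (Real.exp_pos _).ne',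
      Real.log_exp, sub_eq_add_neg]
  rw [← ofReal_one, ← ofReal_sub, ← Real.sigmoid_neg,
    cpow_def_of_ne_zero (ofReal_ne_zero.mpr sigmoid_pos.ne'),
    cpow_def_of_ne_zero (ofReal_ne_zero.mpr neg_pos.ne'), ← ofReal_log sigmoid_pos.le,
    ← ofReal_log neg_pos.le, log_neg, ← Complex.exp_add]
  push_cast
  ring_nf

lemma integral_logisticDensity_mul_cexp_eq_betaIntegral (a : ℂ) :
    ∫ t : ℝ, (logisticDensity t : ℂ) * cexp (a * t) = betaIntegral (1 + a) (1 - a) := by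
  have change_of_variables := integral_image_eq_integral_abs_deriv_smul MeasurableSet.univ
    (fun t _ => (Real.hasDerivAt_sigmoid t).hasDerivWithinAt) Real.sigmoid_injective.injOn
    fun p : ℝ => (p : ℂ) ^ a * (1 - (p : ℂ)) ^ (-a)
  rw [Set.image_univ, Real.range_sigmoid, setIntegral_univ] at change_of_variables
  rw [betaIntegral, intervalIntegral.integral_of_le zero_le_one, integral_Ioc_eq_integral_Ioo,
    add_sub_cancel_left, sub_sub_cancel_left, change_of_variables]
  refine integral_congr_ae (.of_forall fun t => ?_)
  simp only [sigmoid_cpow_mul_one_sub_sigmoid_cpow]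
  rw [← logisticDensity, abs_of_pos (logisticDensity_pos t), real_smul]

lemma betaIntegral_one_add_one_sub {a : ℂ} (ha : a ≠ 0) (hneg : -1 < a.re) (hlt : a.re < 1) :
    betaIntegral (1 + a) (1 - a) = Real.pi * a / Complex.sin (Real.pi * a) := by
  have Gamma_two : Complex.Gamma (1 + a + (1 - a)) = 1 := by
    rw [show 1 + a + (1 - a) = 1 + 1 by ring, Complex.Gamma_add_one _ one_ne_zero,
      Complex.Gamma_one, one_mul]
  have := Gamma_mul_Gamma_eq_betaIntegral (s := 1 + a) (t := 1 - a)
    (by rw [add_re, one_re]; linarith) (by rw [sub_re, one_re]; linarith)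
  rw [Gamma_two, one_mul, add_comm, Complex.Gamma_add_one a ha, mul_assoc,
    Complex.Gamma_mul_Gamma_one_sub] at this
  rw [add_comm, ← this]
  ring

lemma integral_logisticDensity_mul_cexp {k : ℝ} (hk : k ≠ 0) :
    ∫ t : ℝ, (logisticDensity t : ℂ) * cexp (I * k * t) =
      (Real.pi * k / Real.sinh (Real.pi * k) : ℝ) := by
  rw [integral_logisticDensity_mul_cexp_eq_betaIntegral,
    betaIntegral_one_add_one_sub (by simp [hk]) (by simp) (by simp),
    show (Real.pi * (I * k) : ℂ) = (Real.pi * k : ℝ) * I by push_cast; ring, Complex.sin_mul_I,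
    mul_div_mul_right _ _ I_ne_zero]
  push_cast
  rfl

lemma integral_logisticDensity_affine_mul_cexp {a k : ℝ} (ha : 0 < a) (hk : k ≠ 0) (u : ℝ) :
    ∫ t : ℝ, ((a * logisticDensity (a * (u - t)) : ℝ) : ℂ) * cexp (I * k * t) =
      (Real.pi * (k / a) / Real.sinh (Real.pi * (k / a)) : ℝ) * cexp (I * k * u) := by
  let h (w : ℝ) : ℂ := (logisticDensity w : ℂ) * cexp (I * (k / a : ℝ) * w)
  have ha' : (a : ℂ) ≠ 0 := ofReal_ne_zero.mpr ha.ne'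
  have integrand_eq (t : ℝ) : ((a * logisticDensity (a * (u - t)) : ℝ) : ℂ) * cexp (I * k * t) =
      a * cexp (I * k * u) * h (a * (t - u)) := by
    have exponent_eq : I * k * t = I * k * u + I * (k / a : ℝ) * (a * (t - u) : ℝ) := by
      push_cast
      field_simp
      ring
    rw [exponent_eq, Complex.exp_add, ← logisticDensity_neg, ← mul_neg, neg_sub, ofReal_mul]
    ring
  simp_rw [integrand_eq]
  rw [integral_const_mul, integral_sub_right_eq_self (fun t => h (a * t)),
    Measure.integral_comp_mul_left, integral_logisticDensity_mul_cexp (div_ne_zero hk ha.ne'),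
    abs_of_pos (inv_pos.mpr ha), real_smul, ofReal_inv]
  field_simp

lemma hasDerivAt_sigmoidBump (c u v t : ℝ) :
    HasDerivAt (sigmoidBump c u v)
      (2 * c * logisticDensity (2 * c * (v - t)) -
        2 * c * logisticDensity (2 * c * (u - t))) t := by
  have step (b : ℝ) : HasDerivAt (fun t => Real.sigmoid (2 * c * (b - t)))
      (logisticDensity (2 * c * (b - t)) * (2 * c * -1)) t :=
    (Real.hasDerivAt_sigmoid _).comp t (((hasDerivAt_id t).const_sub b).const_mul (2 * c))
  exact ((step u).sub (step v)).congr_deriv (by ring)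

lemma integral_deriv_mul_cexp {f f' : ℝ → ℝ} (hderiv : ∀ t, HasDerivAt f (f' t) t)
    (hf : Integrable f) (hf' : Integrable f') (k : ℝ) :
    ∫ t : ℝ, (f' t : ℂ) * cexp (I * k * t) = -(I * k) * ∫ t : ℝ, (f t : ℂ) * cexp (I * k * t) := by
  have hasDerivAt_phase (t : ℝ) :
      HasDerivAt (fun t : ℝ => cexp (I * k * t)) (I * k * cexp (I * k * t)) t :=
    ((hasDerivAt_id t).ofReal_comp.const_mul (I * (k : ℂ))).cexp.congr_deriv
      (by simp [mul_comm])
  have by_parts := integral_mul_deriv_eq_deriv_mul_of_integrable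
    (fun t _ => (hderiv t).ofReal_comp) (fun t _ => hasDerivAt_phase t)
    (((integrable_ofReal_mul_cexp hf k).const_mul (I * k)).congr
      (.of_forall fun t => mul_left_comm _ _ _))
    (integrable_ofReal_mul_cexp hf' k) (integrable_ofReal_mul_cexp hf k)
  rw [neg_mul, ← integral_const_mul, ← neg_eq_iff_eq_neg, ← by_parts]
  simp only [mul_left_comm]

theorem integral_sigmoidBump_mul_cexp {c k : ℝ} (hc : 0 < c) (hk : k ≠ 0) (u v : ℝ) :
    ∫ t : ℝ, (sigmoidBump c u v t : ℂ) * cexp (I * k * t) =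
      -I * Real.pi / (2 * c * Real.sinh (Real.pi * (k / (2 * c)))) *
        (cexp (I * k * u) - cexp (I * k * v)) := by
  have hIk : -(I * (k : ℂ)) ≠ 0 :=
    neg_ne_zero.mpr (mul_ne_zero I_ne_zero (ofReal_ne_zero.mpr hk))
  have hk' : (k : ℂ) ≠ 0 := ofReal_ne_zero.mpr hk
  have h2c : 0 < 2 * c := by positivity
  have integrable_density (b : ℝ) :
      Integrable fun t => 2 * c * logisticDensity (2 * c * (b - t)) :=
    ((integrable_logisticDensity.comp_mul_left' h2c.ne').comp_sub_left b).const_mul _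
  have transform_deriv := integral_deriv_mul_cexp (hasDerivAt_sigmoidBump c u v)
    (integrable_sigmoidBump hc u v) ((integrable_density v).sub (integrable_density u)) k
  simp only [ofReal_sub, sub_mul] at transform_deriv
  rw [integral_sub (integrable_ofReal_mul_cexp (integrable_density v) k)
      (integrable_ofReal_mul_cexp (integrable_density u) k),
    integral_logisticDensity_affine_mul_cexp h2c hk,
    integral_logisticDensity_affine_mul_cexp h2c hk] at transform_deriv
  refine mul_left_cancel₀ hIk (transform_deriv.symm.trans ?_)
  push_cast
  field_simp
  rw [I_sq]
  ring

end Fourier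

/-! ### Growth of integral transforms -/

section Growth

variable {ι κ : Type*} [Fintype ι] [Fintype κ]

/-- `f` grows more slowly than every exponential `exp(ε ∑ |x_j|)`, uniformly on `ℝ^ι`. -/
def HasSubexpGrowth (f : (ι → ℝ) → ℂ) : Prop :=
  ∀ ε > 0, ∃ C, ∀ x, ‖f x‖ ≤ C * Real.exp (ε * ∑ j, |x j|)

/-- A kernel `M(x, z)` decaying exponentially in `z`, at a rate `δ` which may depend on the
exponential growth `ε` tolerated in `x`. -/
def IsExpDecayingKernel (M : (ι → ℝ) → (κ → ℝ) → ℂ) : Prop :=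
  ∀ ε > 0, ∃ δ > 0, ∃ C, ∀ x z,
    ‖M x z‖ ≤ C * Real.exp (ε * ∑ j, |x j|) * Real.exp (-(δ * ∑ k, |z k|))

lemma integrable_exp_neg_mul_sum_abs {δ : ℝ} (hδ : 0 < δ) :
    Integrable fun z : κ → ℝ => Real.exp (-(δ * ∑ k, |z k|)) := by
  simp_rw [Finset.mul_sum, ← Finset.sum_neg_distrib, Real.exp_sum]
  exact Integrable.fintype_prod fun _ => integrable_exp_neg_mul_abs hδ

lemma HasSubexpGrowth.bounded_mul {f g : (ι → ℝ) → ℂ} (hf : HasSubexpGrowth f) {B : ℝ}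
    (hg : ∀ x, ‖g x‖ ≤ B) : HasSubexpGrowth fun x => g x * f x := by
  intro ε hε
  obtain ⟨C, hC⟩ := hf ε hε
  refine ⟨B * C, fun x => ?_⟩
  rw [norm_mul, mul_assoc]
  exact mul_le_mul (hg x) (hC x) (norm_nonneg _) ((norm_nonneg _).trans (hg x))

lemma IsExpDecayingKernel.mul_subexpGrowth {M : (ι → ℝ) → (κ → ℝ) → ℂ} {f : (κ → ℝ) → ℂ}
    (hM : IsExpDecayingKernel M) (hf : HasSubexpGrowth f) :
    IsExpDecayingKernel fun x z => M x z * f z := by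
  intro ε hε
  obtain ⟨δ, hδ, C, hC⟩ := hM ε hε
  obtain ⟨D, hD⟩ := hf (δ / 2) (half_pos hδ)
  refine ⟨δ / 2, half_pos hδ, C * D, fun x z => ?_⟩
  calc ‖M x z * f z‖
      ≤ (C * Real.exp (ε * ∑ j, |x j|) * Real.exp (-(δ * ∑ k, |z k|))) *
          (D * Real.exp (δ / 2 * ∑ k, |z k|)) := by
        rw [norm_mul]
        exact mul_le_mul (hC x z) (hD z) (norm_nonneg _) ((norm_nonneg _).trans (hC x z))
    _ = C * D * Real.exp (ε * ∑ j, |x j|) *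
          (Real.exp (-(δ * ∑ k, |z k|)) * Real.exp (δ / 2 * ∑ k, |z k|)) := by ring
    _ = C * D * Real.exp (ε * ∑ j, |x j|) * Real.exp (-(δ / 2 * ∑ k, |z k|)) := by
        rw [← Real.exp_add]
        ring_nf

lemma IsExpDecayingKernel.integrable {M : (ι → ℝ) → (κ → ℝ) → ℂ} (hM : IsExpDecayingKernel M)
    {x : ι → ℝ} (hx : AEStronglyMeasurable (M x)) : Integrable (M x) := by
  obtain ⟨δ, hδ, C, hC⟩ := hM 1 one_pos
  exact ((integrable_exp_neg_mul_sum_abs hδ).const_mul _).mono' hx (.of_forall (hC x))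

lemma IsExpDecayingKernel.hasSubexpGrowth_integral {M : (ι → ℝ) → (κ → ℝ) → ℂ}
    (hM : IsExpDecayingKernel M) : HasSubexpGrowth fun x => ∫ z, M x z := by
  intro ε hε
  obtain ⟨δ, hδ, C, hC⟩ := hM ε hε
  refine ⟨C * ∫ z : κ → ℝ, Real.exp (-(δ * ∑ k, |z k|)), fun x => ?_⟩
  rw [mul_right_comm, ← integral_const_mul]
  exact norm_integral_le_of_norm_le ((integrable_exp_neg_mul_sum_abs hδ).const_mul _)
    (.of_forall (hC x))

end Growth

section BumpKernel

variable {n : ℕ} {c : ℝ}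

lemma abs_castSucc_add_abs_last_le_sum (x : Fin (n + 1) → ℝ) (j : Fin n) :
    |x j.castSucc| + |x (Fin.last n)| ≤ ∑ i, |x i| := by
  rw [Fin.sum_univ_castSucc]
  gcongr
  exact Finset.single_le_sum (f := fun i : Fin n => |x i.castSucc|) (fun i _ => abs_nonneg _)
    (Finset.mem_univ j)

lemma abs_det_bumpMatrix_le {s : ℝ} (hs : 0 ≤ s) (hsc : s ≤ 2 * c) (x : Fin (n + 1) → ℝ)
    (z : Fin n → ℝ) :
    |(bumpMatrix c x z).det| ≤
      n.factorial * Real.exp (s * n * ∑ j, |x j|) * Real.exp (-(s * ∑ k, |z k|)) := by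
  have entry_le (j k : Fin n) :
      |Real.exp (s * |z k|) * bumpMatrix c x z j k| ≤ Real.exp (s * ∑ i, |x i|) := by
    calc |Real.exp (s * |z k|) * bumpMatrix c x z j k|
        ≤ Real.exp (s * |z k|) *
            Real.exp (s * (|x j.castSucc| + |x (Fin.last n)| - |z k|)) := by
          rw [abs_mul, Real.abs_exp]
          gcongr
          exact abs_sigmoidBump_le hs hsc _ _ _
      _ = Real.exp (s * (|x j.castSucc| + |x (Fin.last n)|)) := by
          rw [← Real.exp_add]
          ring_nf
      _ ≤ Real.exp (s * ∑ i, |x i|) := by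
          gcongr
          exact abs_castSucc_add_abs_last_le_sum x j
  have scaled_det_le := Matrix.det_le (abv := AbsoluteValue.abs)
    (A := Matrix.of fun j k => Real.exp (s * |z k|) * bumpMatrix c x z j k) entry_le
  rw [Matrix.det_mul_row, ← Real.exp_sum, ← Finset.mul_sum, AbsoluteValue.abs_apply, abs_mul,
    Real.abs_exp, Fintype.card_fin, nsmul_eq_mul, ← Real.exp_nat_mul] at scaled_det_le
  rw [Real.exp_neg, ← div_eq_mul_inv, le_div_iff₀' (Real.exp_pos _)]
  convert scaled_det_le using 3
  ring

lemma isExpDecayingKernel_det_bumpMatrix (hc : 0 < c) :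
    IsExpDecayingKernel fun (x : Fin (n + 1) → ℝ) (z : Fin n → ℝ) =>
      ((bumpMatrix c x z).det : ℂ) := by
  intro ε hε
  let s := min (2 * c) (ε / (n + 1))
  have hs : 0 < s := by positivity
  refine ⟨s, hs, n.factorial, fun x z => ?_⟩
  have rate_le : s * n ≤ ε :=
    calc s * n ≤ ε / (n + 1) * (n + 1) := by
          gcongr
          · exact min_le_right _ _
          · linarith
      _ = ε := div_mul_cancel₀ _ (by positivity)
  rw [norm_real, Real.norm_eq_abs]
  refine (abs_det_bumpMatrix_le hs.le (min_le_left _ _) x z).trans ?_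
  gcongr

end BumpKernel

/-! ### The recursion -/

section Recursion

variable {ap am : ℝ} {n : ℕ}

/-- The spectral variables `(y₁ - y_N, …, y_{N-1} - y_N)` passed down the recursion. -/
def subLast (y : Fin (n + 1) → ℝ) : Fin n → ℝ := fun j => y j.castSucc - y (Fin.last n)

/-- The integrand of the recursion step from `J_n` to `J_{n+1}`, available also for `n = 0`. -/
noncomputable def freeIntegrand (ap am : ℝ) (x y : Fin (n + 1) → ℝ) (z : Fin n → ℝ) : ℂ :=
  ((sinhVandermonde (Real.pi / am) z ^ 2 * sechKernel (Real.pi / am) x z : ℝ) : ℂ) *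
    Jfree ap am n z (subLast y)

/-- `J_n` times the hyperbolic Vandermonde product of `x`, for which the kernel of the recursion is
a determinant; it vanishes when two of the `x_j` coincide. -/
noncomputable def antisymmJ (ap am : ℝ) (x y : Fin n → ℝ) : ℂ :=
  sinhVandermonde (Real.pi / am) x * Jfree ap am n x y

/-- The phase `exp(iα y_{n+1} (x₁ + ⋯ + x_{n+1}))` in front of the integral. -/
noncomputable def centerPhase (ap am : ℝ) (x y : Fin (n + 1) → ℝ) : ℂ :=
  cexp (I * (alphaPar ap am : ℂ) * (y (Fin.last n) : ℂ) * ∑ j, (x j : ℂ))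

lemma norm_centerPhase (x y : Fin (n + 1) → ℝ) : ‖centerPhase ap am x y‖ = 1 := by
  rw [centerPhase, mul_assoc, mul_assoc, ← ofReal_sum, ← ofReal_mul, ← ofReal_mul,
    norm_exp_I_mul_ofReal]

lemma freeIntegrand_eq_prod (x y : Fin (n + 1) → ℝ) (z : Fin n → ℝ) :
    freeIntegrand ap am x y z =
      (∏ q ∈ ltPairs n, ((4 * Real.sinh (Real.pi * (z q.1 - z q.2) / am) ^ 2 : ℝ) : ℂ)) *
        (∏ j, ∏ k, ((1 / (2 * Real.cosh (Real.pi * (x j - z k) / am)) : ℝ) : ℂ)) *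
        Jfree ap am n z (subLast y) := by
  simp only [freeIntegrand, sinhVandermonde, sechKernel, ← Finset.prod_pow, mul_pow,
    div_mul_eq_mul_div, ofReal_mul, ofReal_prod]
  norm_num

lemma norm_freeIntegrand (x y : Fin (n + 1) → ℝ) (z : Fin n → ℝ) :
    ‖freeIntegrand ap am x y z‖ = sinhVandermonde (Real.pi / am) z ^ 2 *
      sechKernel (Real.pi / am) x z * ‖Jfree ap am n z (subLast y)‖ := by
  rw [freeIntegrand, norm_mul,
    Complex.norm_of_nonneg (mul_nonneg (sq_nonneg _) (sechKernel_pos _ _ _).le)]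

lemma Jfree_succ (x y : Fin (n + 1) → ℝ) :
    Jfree ap am (n + 1) x y =
      centerPhase ap am x y / n.factorial * ∫ z, freeIntegrand ap am x y z := by
  cases n with
  | zero =>
    rw [volume_pi, Measure.pi_of_empty]
    simp [Jfree, centerPhase, freeIntegrand, sinhVandermonde_zero, sechKernel, mul_right_comm]
  | succ n =>
    simp_rw [freeIntegrand_eq_prod]
    rfl

lemma sinhVandermonde_mul_freeIntegrand (x y : Fin (n + 1) → ℝ) (z : Fin n → ℝ) :
    sinhVandermonde (Real.pi / am) x * freeIntegrand ap am x y z =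
      (bumpMatrix (Real.pi / am) x z).det * antisymmJ ap am z (subLast y) := by
  rw [det_bumpMatrix_eq, freeIntegrand, antisymmJ]
  push_cast
  ring

lemma antisymmJ_succ (x y : Fin (n + 1) → ℝ) :
    antisymmJ ap am x y = centerPhase ap am x y / n.factorial *
      ∫ z, (bumpMatrix (Real.pi / am) x z).det * antisymmJ ap am z (subLast y) := by
  simp_rw [← sinhVandermonde_mul_freeIntegrand]
  rw [antisymmJ, Jfree_succ, integral_const_mul]
  ring

end Recursion

/-! ### Absolute convergence -/

section Convergence

variable {ap am : ℝ} {n : ℕ}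

lemma continuous_sinhVandermonde (c : ℝ) : Continuous (sinhVandermonde (n := n) c) := by
  unfold sinhVandermonde
  fun_prop

lemma continuous_sechKernel {ι κ : Type*} [Fintype ι] [Fintype κ] (c : ℝ) :
    Continuous fun p : (ι → ℝ) × (κ → ℝ) => sechKernel c p.1 p.2 := by
  refine continuous_finsetProd _ fun j _ => continuous_finsetProd _ fun k _ => ?_
  refine continuous_const.div (by fun_prop) fun p => ?_
  have := Real.cosh_pos (c * (p.1 j - p.2 k))
  positivity

lemma stronglyMeasurable_freeIntegrand (y : Fin (n + 1) → ℝ)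
    (hJ : StronglyMeasurable fun z => Jfree ap am n z (subLast y)) :
    StronglyMeasurable fun p : (Fin (n + 1) → ℝ) × (Fin n → ℝ) =>
      freeIntegrand ap am p.1 y p.2 := by
  have weight_continuous : Continuous fun p : (Fin (n + 1) → ℝ) × (Fin n → ℝ) =>
      ((sinhVandermonde (Real.pi / am) p.2 ^ 2 * sechKernel (Real.pi / am) p.1 p.2 : ℝ) : ℂ) :=
    continuous_ofReal.comp ((((continuous_sinhVandermonde _).comp continuous_snd).pow 2).mul
      (continuous_sechKernel _))
  exact weight_continuous.stronglyMeasurable.mul (hJ.comp_measurable measurable_snd)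

lemma stronglyMeasurable_Jfree (y : Fin n → ℝ) :
    StronglyMeasurable fun x => Jfree ap am n x y := by
  induction n with
  | zero => exact stronglyMeasurable_const
  | succ n ih =>
    have phase_continuous : Continuous fun x => centerPhase ap am x y / n.factorial := by
      unfold centerPhase
      fun_prop
    simp_rw [Jfree_succ]
    exact phase_continuous.stronglyMeasurable.mul
      (stronglyMeasurable_freeIntegrand y (ih (subLast y))).integral_prod_right'

lemma hasSubexpGrowth_antisymmJ (ham : 0 < am) (y : Fin n → ℝ) :
    HasSubexpGrowth fun x => antisymmJ ap am x y := by
  induction n with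
  | zero => exact fun ε _ => ⟨1, fun x => by simp [antisymmJ, Jfree, sinhVandermonde_zero]⟩
  | succ n ih =>
    have norm_prefactor_le (x : Fin (n + 1) → ℝ) :
        ‖centerPhase ap am x y / n.factorial‖ ≤ 1 / n.factorial := by
      rw [norm_div, norm_centerPhase, norm_natCast]
    simp_rw [antisymmJ_succ]
    exact ((isExpDecayingKernel_det_bumpMatrix (by positivity)).mul_subexpGrowth
      (ih (subLast y))).hasSubexpGrowth_integral.bounded_mul norm_prefactor_le

lemma aestronglyMeasurable_freeIntegrand (x y : Fin (n + 1) → ℝ) :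
    AEStronglyMeasurable (freeIntegrand ap am x y) :=
  ((stronglyMeasurable_freeIntegrand y (stronglyMeasurable_Jfree _)).comp_measurable
    measurable_prodMk_left).aestronglyMeasurable

lemma integrable_freeIntegrand_of_injective (ham : 0 < am) {x : Fin (n + 1) → ℝ}
    (hx : Function.Injective x) (y : Fin (n + 1) → ℝ) :
    Integrable (freeIntegrand ap am x y) := by
  have hΔ : (sinhVandermonde (Real.pi / am) x : ℂ) ≠ 0 :=
    ofReal_ne_zero.mpr (sinhVandermonde_ne_zero (by positivity) hx)
  have decaying := (isExpDecayingKernel_det_bumpMatrix (n := n) (c := Real.pi / am)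
    (by positivity)).mul_subexpGrowth (hasSubexpGrowth_antisymmJ (ap := ap) ham (subLast y))
  simp_rw [← sinhVandermonde_mul_freeIntegrand] at decaying
  have integrable_smul := decaying.integrable (x := x)
    ((aestronglyMeasurable_freeIntegrand x y).const_mul _)
  simpa [hΔ] using integrable_smul.const_mul (sinhVandermonde (Real.pi / am) x : ℂ)⁻¹

lemma cosh_le_exp_abs_sub_mul_cosh (s t : ℝ) :
    Real.cosh t ≤ Real.exp |s - t| * Real.cosh s := by
  have exp_le : Real.exp t ≤ Real.exp |s - t| * Real.exp s := by
    rw [← Real.exp_add, Real.exp_le_exp]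
    linarith [neg_abs_le (s - t)]
  have exp_neg_le : Real.exp (-t) ≤ Real.exp |s - t| * Real.exp (-s) := by
    rw [← Real.exp_add, Real.exp_le_exp]
    linarith [le_abs_self (s - t)]
  rw [Real.cosh_eq, Real.cosh_eq]
  linarith

lemma sechKernel_le_prod_exp_mul {ι κ : Type*} [Fintype ι] [Fintype κ] (c : ℝ) (x x' : ι → ℝ)
    (z : κ → ℝ) :
    sechKernel c x z ≤ (∏ j, ∏ _k : κ, Real.exp |c * (x j - x' j)|) * sechKernel c x' z := by
  simp only [sechKernel, ← Finset.prod_mul_distrib]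
  have sech_nonneg (t : ℝ) : 0 ≤ 1 / (2 * Real.cosh t) := by
    have := Real.cosh_pos t
    positivity
  refine Finset.prod_le_prod (fun j _ => Finset.prod_nonneg fun k _ => sech_nonneg _) fun j _ =>
    Finset.prod_le_prod (fun k _ => sech_nonneg _) fun k _ => ?_
  have cosh_le := cosh_le_exp_abs_sub_mul_cosh (c * (x j - z k)) (c * (x' j - z k))
  rw [← mul_sub, sub_sub_sub_cancel_right] at cosh_le
  rw [mul_one_div, div_le_div_iff₀ (by linarith [Real.cosh_pos (c * (x j - z k))])
    (by linarith [Real.cosh_pos (c * (x' j - z k))])]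
  linarith

theorem integrable_freeIntegrand (ham : 0 < am) (x y : Fin (n + 1) → ℝ) :
    Integrable (freeIntegrand ap am x y) := by
  let x₀ : Fin (n + 1) → ℝ := fun j => (j : ℕ)
  have x₀_injective : Function.Injective x₀ := Nat.cast_injective.comp Fin.val_injective
  have dominating := (integrable_freeIntegrand_of_injective (ap := ap) ham x₀_injective y).norm
  set C := ∏ j, ∏ _k : Fin n, Real.exp |Real.pi / am * (x j - x₀ j)|
  have kernel_le (z : Fin n → ℝ) :
      sechKernel (Real.pi / am) x z ≤ C * sechKernel (Real.pi / am) x₀ z :=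
    sechKernel_le_prod_exp_mul _ x x₀ z
  refine (dominating.const_mul C).mono' (aestronglyMeasurable_freeIntegrand x y)
    (.of_forall fun z => ?_)
  calc ‖freeIntegrand ap am x y z‖
      ≤ sinhVandermonde (Real.pi / am) z ^ 2 * (C * sechKernel (Real.pi / am) x₀ z) *
          ‖Jfree ap am n z (subLast y)‖ := by
        rw [norm_freeIntegrand]
        gcongr
        exact kernel_le z
    _ = C * ‖freeIntegrand ap am x₀ y z‖ := by
        rw [norm_freeIntegrand]
        ring

end Convergence

/-! ### The explicit formula -/

section ExplicitFormula

variable {ap am : ℝ} {n : ℕ}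

/-- The matrix `exp(iα x_j y_k)` of plane waves. -/
noncomputable def planeWaveMatrix (ap am : ℝ) (x y : Fin n → ℝ) : Matrix (Fin n) (Fin n) ℂ :=
  Matrix.of fun j k => cexp (I * ((alphaPar ap am * y k : ℝ) : ℂ) * (x j : ℂ))

/-- The factor `-i a₋ / (2 sinh(π y / a₊))` by which the Fourier transform acts on a bump. -/
noncomputable def spectralFactor (ap am y : ℝ) : ℂ :=
  -I * am / (2 * Real.sinh (Real.pi * y / ap))

lemma det_planeWaveMatrix_succ (x y : Fin (n + 1) → ℝ) :
    (planeWaveMatrix ap am x y).det = centerPhase ap am x y *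
      (Matrix.of fun j k : Fin n =>
        cexp (I * ((alphaPar ap am * subLast y k : ℝ) : ℂ) * (x j.castSucc : ℂ)) -
          cexp (I * ((alphaPar ap am * subLast y k : ℝ) : ℂ) * (x (Fin.last n) : ℂ))).det := by
  have factor_last (j k : Fin (n + 1)) :
      cexp (I * ((alphaPar ap am * y k : ℝ) : ℂ) * (x j : ℂ)) =
        cexp (I * (alphaPar ap am : ℂ) * (y (Fin.last n) : ℂ) * (x j : ℂ)) *
          cexp (I * ((alphaPar ap am * (y k - y (Fin.last n)) : ℝ) : ℂ) * (x j : ℂ)) := by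
    rw [← Complex.exp_add]
    push_cast
    ring_nf
  simp_rw [planeWaveMatrix, factor_last]
  rw [det_of_mul_column, ← Complex.exp_sum, ← Finset.mul_sum, ← centerPhase,
    det_eq_last_mul_det_schur _ (by simp)]
  simp [subLast]

lemma integrable_bump_mul_planeWave (ham : 0 < am) (u v y : ℝ) :
    Integrable fun t : ℝ => (sigmoidBump (Real.pi / am) u v t : ℂ) *
      cexp (I * ((alphaPar ap am * y : ℝ) : ℂ) * t) :=
  integrable_ofReal_mul_cexp (integrable_sigmoidBump (by positivity) u v) _

lemma integral_bump_mul_planeWave (hap : ap ≠ 0) (ham : 0 < am) {y : ℝ} (hy : y ≠ 0) (u v : ℝ) :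
    ∫ t : ℝ, (sigmoidBump (Real.pi / am) u v t : ℂ) *
        cexp (I * ((alphaPar ap am * y : ℝ) : ℂ) * t) =
      spectralFactor ap am y * (cexp (I * ((alphaPar ap am * y : ℝ) : ℂ) * u) -
        cexp (I * ((alphaPar ap am * y : ℝ) : ℂ) * v)) := by
  have hα : alphaPar ap am * y ≠ 0 := by
    unfold alphaPar
    positivity
  have frequency_eq : Real.pi * (alphaPar ap am * y / (2 * (Real.pi / am))) = Real.pi * y / ap := by
    unfold alphaPar
    field_simp
  have hπ : (Real.pi : ℂ) ≠ 0 := ofReal_ne_zero.mpr Real.pi_ne_zero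
  have ham' : (am : ℂ) ≠ 0 := ofReal_ne_zero.mpr ham.ne'
  rw [integral_sigmoidBump_mul_cexp (by positivity) hα, frequency_eq, spectralFactor]
  push_cast
  field_simp

lemma integral_det_bumpMatrix_mul_det_planeWaveMatrix (hap : ap ≠ 0) (ham : 0 < am)
    (x y : Fin (n + 1) → ℝ) (hy : ∀ k : Fin n, subLast y k ≠ 0) :
    centerPhase ap am x y * ∫ z, ((bumpMatrix (Real.pi / am) x z).det : ℂ) *
        (planeWaveMatrix ap am z (subLast y)).det =
      n.factorial * (∏ k, spectralFactor ap am (subLast y k)) *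
        (planeWaveMatrix ap am x y).det := by
  have ofReal_det (z : Fin n → ℝ) : ((bumpMatrix (Real.pi / am) x z).det : ℂ) =
      (Matrix.of fun j k =>
        (sigmoidBump (Real.pi / am) (x j.castSucc) (x (Fin.last n)) (z k) : ℂ)).det :=
    ofRealHom.map_det _
  simp_rw [ofReal_det]
  rw [volume_pi]
  simp only [planeWaveMatrix]
  rw [integral_det_mul_det (μ := volume)
    (f := fun j t => (sigmoidBump (Real.pi / am) (x j.castSucc) (x (Fin.last n)) t : ℂ))
    (g := fun k t => cexp (I * ((alphaPar ap am * subLast y k : ℝ) : ℂ) * t))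
    fun j k => integrable_bump_mul_planeWave ham _ _ _]
  simp_rw [integral_bump_mul_planeWave hap ham (hy _)]
  rw [det_of_mul_row,
    ← planeWaveMatrix, det_planeWaveMatrix_succ, Fintype.card_fin]
  ring

theorem antisymmJ_eq (hap : ap ≠ 0) (ham : 0 < am) (x : Fin n → ℝ) {y : Fin n → ℝ}
    (hy : Function.Injective y) :
    antisymmJ ap am x y =
      (∏ q ∈ ltPairs n, spectralFactor ap am (y q.1 - y q.2)) *
        (planeWaveMatrix ap am x y).det := by
  induction n with
  | zero =>
    rw [Finset.prod_eq_one fun q _ => q.1.elim0]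
    simp [antisymmJ, Jfree, sinhVandermonde_zero]
  | succ n ih =>
    have subLast_ne_zero (k : Fin n) : subLast y k ≠ 0 :=
      sub_ne_zero.mpr (hy.ne (Fin.castSucc_lt_last k).ne)
    have subLast_injective : Function.Injective (subLast y) :=
      (sub_left_injective (b := y (Fin.last n))).comp (hy.comp (Fin.castSucc_injective n))
    have hn : (n.factorial : ℂ) ≠ 0 := Nat.cast_ne_zero.mpr n.factorial_ne_zero
    have andreief := integral_det_bumpMatrix_mul_det_planeWaveMatrix hap ham x y subLast_ne_zero
    simp_rw [antisymmJ_succ, ih _ subLast_injective, mul_left_comm _ (Finset.prod _ _)]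
    rw [integral_const_mul, prod_ltPairs_succ fun j k => spectralFactor ap am (y j - y k)]
    simp only [subLast, sub_sub_sub_cancel_right] at andreief ⊢
    field_simp
    linear_combination
      (∏ q ∈ ltPairs n, spectralFactor ap am (y q.1.castSucc - y q.2.castSucc)) * andreief

lemma det_planeWaveMatrix_eq_sum (x y : Fin n → ℝ) :
    (planeWaveMatrix ap am x y).det =
      ∑ σ : Equiv.Perm (Fin n), ((Equiv.Perm.sign σ : ℤ) : ℂ) *
        cexp (I * (alphaPar ap am : ℂ) * ∑ j, (x j : ℂ) * (y (σ j) : ℂ)) := by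
  rw [← Matrix.det_transpose, Matrix.det_apply']
  refine Finset.sum_congr rfl fun σ _ => ?_
  simp only [planeWaveMatrix, Matrix.transpose_apply, Matrix.of_apply]
  rw [← Complex.exp_sum, Finset.mul_sum]
  push_cast
  simp only [mul_assoc, mul_comm (y _ : ℂ)]

theorem Jfree_eq_prod_mul_det (hap : ap ≠ 0) (ham : 0 < am) {x y : Fin n → ℝ}
    (hx : Function.Injective x) (hy : Function.Injective y) :
    Jfree ap am n x y =
      (∏ q ∈ ltPairs n, -I * am / (4 * Real.sinh (Real.pi * (x q.1 - x q.2) / am) *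
        Real.sinh (Real.pi * (y q.1 - y q.2) / ap))) * (planeWaveMatrix ap am x y).det := by
  have hΔ : (sinhVandermonde (Real.pi / am) x : ℂ) ≠ 0 :=
    ofReal_ne_zero.mpr (sinhVandermonde_ne_zero (by positivity) hx)
  have factor_eq (q : Fin n × Fin n) :
      -I * am / (4 * Real.sinh (Real.pi * (x q.1 - x q.2) / am) *
          Real.sinh (Real.pi * (y q.1 - y q.2) / ap)) =
        spectralFactor ap am (y q.1 - y q.2) /
          ((2 * Real.sinh (Real.pi / am * (x q.1 - x q.2)) : ℝ) : ℂ) := by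
    rw [spectralFactor, div_mul_eq_mul_div, div_div]
    push_cast
    ring_nf
  simp_rw [factor_eq]
  rw [Finset.prod_div_distrib, ← ofReal_prod, ← sinhVandermonde, div_mul_eq_mul_div,
    ← antisymmJ_eq hap ham x hy, antisymmJ, mul_div_cancel_left₀ _ hΔ]

end ExplicitFormula

/-- In the free case `b = a₊` all the integrals in the recursive scheme converge
absolutely, and `J_N` is given by the explicit multivariate sine-transform kernel formula. -/
theorem statement7 (ap am : ℝ) (hap : 0 < ap) (ham : 0 < am) :
    (∀ (N : ℕ) (x y : Fin (N + 2) → ℝ),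
      Integrable (fun z : Fin (N + 1) → ℝ =>
        (∏ q ∈ Finset.univ.filter (fun q : Fin (N + 1) × Fin (N + 1) => q.1 < q.2),
          ((4 * Real.sinh (Real.pi * (z q.1 - z q.2) / am) ^ 2 : ℝ) : ℂ)) *
        (∏ j : Fin (N + 2), ∏ k : Fin (N + 1),
          ((1 / (2 * Real.cosh (Real.pi * (x j - z k) / am)) : ℝ) : ℂ)) *
        Jfree ap am (N + 1) z
          (fun j => y (Fin.castSucc j) - y (Fin.last (N + 1))))) ∧
    (∀ (N : ℕ), 1 ≤ N → ∀ x y : Fin N → ℝ,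
      (∀ j k : Fin N, j < k → x j ≠ x k) → (∀ j k : Fin N, j < k → y j ≠ y k) →
      Jfree ap am N x y =
        (∏ q ∈ Finset.univ.filter (fun q : Fin N × Fin N => q.1 < q.2),
          (-Complex.I * (am : ℂ)) /
            ((4 : ℂ) * (Real.sinh (Real.pi * (x q.1 - x q.2) / am) : ℂ) *
              (Real.sinh (Real.pi * (y q.1 - y q.2) / ap) : ℂ))) *
        ∑ σ : Equiv.Perm (Fin N), ((Equiv.Perm.sign σ : ℤ) : ℂ) *
          Complex.exp (Complex.I * (alphaPar ap am : ℂ) *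
            ∑ j : Fin N, (x j : ℂ) * (y (σ j) : ℂ))) := by
  refine ⟨fun N x y => ?_, fun N _ x y hx hy => ?_⟩
  · have integrable := integrable_freeIntegrand (ap := ap) ham x y
    rw [funext (freeIntegrand_eq_prod x y)] at integrable
    exact integrable
  · rw [Jfree_eq_prod_mul_det hap.ne' ham (.of_lt_imp_ne hx) (.of_lt_imp_ne hy),
      det_planeWaveMatrix_eq_sum]
end

section
/- Fix y ∈ ℝ². Then there exists a unique function F, holomorphic on the open set D₂ = {(b,x) ∈ S_a × ℂ² : |Im(x₁−x₂)| < 2a − Re b}, such that F(b,x) = J₂(b;x,y) for all b ∈ S_a and all x ∈ ℝ². -/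
open MeasureTheory Complex

/-- The function `g(a₊,a₋;z)` from the integral representation of the hyperbolic gamma
function. -/
noncomputable def ghyp (ap am : ℝ) (z : ℂ) : ℂ :=
  ∫ y in Set.Ioi (0 : ℝ),
    (1 / (y : ℂ)) *
      (Complex.sin (2 * (y : ℂ) * z) /
          (2 * Complex.sinh ((ap : ℂ) * (y : ℂ)) * Complex.sinh ((am : ℂ) * (y : ℂ))) -
        z / ((ap : ℂ) * (am : ℂ) * (y : ℂ)))

/-- The hyperbolic gamma function `G(a₊,a₋;z) = exp(i g(a₊,a₋;z))`. -/
noncomputable def Ghyp (ap am : ℝ) (z : ℂ) : ℂ := Complex.exp (Complex.I * ghyp ap am z)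

/-- The two-particle joint eigenfunction `J₂(b;x,y)` for real `x, y`. -/
noncomputable def J2 (ap am : ℝ) (b : ℂ) (x y : Fin 2 → ℝ) : ℂ :=
  Complex.exp (Complex.I * (alphaPar ap am : ℂ) * (y 1 : ℂ) * ((x 0 : ℂ) + (x 1 : ℂ))) *
    ∫ z : ℝ, Complex.exp (Complex.I * (alphaPar ap am : ℂ) * (z : ℂ) * ((y 0 : ℂ) - (y 1 : ℂ))) *
      ∏ j : Fin 2,
        Ghyp ap am ((x j : ℂ) - (z : ℂ) - Complex.I * b / 2) /
          Ghyp ap am ((x j : ℂ) - (z : ℂ) + Complex.I * b / 2)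

/-- The domain `D₂ = {(b,x) ∈ S_a × ℂ² : |Im(x₁−x₂)| < 2a − Re b}`. -/
def D2 (ap am : ℝ) : Set (ℂ × (Fin 2 → ℂ)) :=
  {p | (0 < p.1.re ∧ p.1.re < ap + am) ∧ |(p.2 0 - p.2 1).im| < ap + am - p.1.re}

/-!
Substituting `z ↦ z + (x₁ + x₂) / 2` in the integral for `J₂` moves the dependence on `x₁ + x₂` into
an entire exponential factor and leaves an integral depending only on `b` and `u = (x₁ - x₂) / 2`.
Its integrand makes sense as long as `|Im u| + Re b / 2 < a`, which is the condition defining `D₂`.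

On closed substrips of `|Im z| < a` one has `Im g(z) = -κ Im z |Re z| + O(1)` with `κ > 0`: in the
integral for `Im g(z)` multiply the subtracted term `Im z / (a₊a₋y²)` by
`1 = cos (2y Re z) + 2 sin² (y Re z)`. The `sin²` part integrates to a multiple of `Im z |Re z|`,
and the rest is `cos (2y Re z)` times an integrable function not depending on `Re z`.
Hence `|G(w - ib/2) / G(w + ib/2)|` is at most a constant times `exp (-κ Re b |Re w|)`, locally
uniformly in `b` and `Im w`, so the shifted integral is dominated locally uniformly in `(b, u)` and
defines a holomorphic function.

For uniqueness, fix `b`: the slice of `D₂` is a tube over a convex neighbourhood of `0`, and a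
holomorphic function on such a tube is determined by its values at real points.
-/

section ParametricIntegral

open Filter Topology

variable {X E F : Type*} [MeasurableSpace X] {μ : Measure X}
  [NormedAddCommGroup E] [NormedAddCommGroup F]

lemma aestronglyMeasurable_clm_of_apply {𝕜 : Type*} [NontriviallyNormedField 𝕜] [CompleteSpace 𝕜]
    [NormedSpace 𝕜 E] [FiniteDimensional 𝕜 E] [NormedSpace 𝕜 F] {φ : X → E →L[𝕜] F}
    (hφ : ∀ v, AEStronglyMeasurable (fun a => φ a v) μ) : AEStronglyMeasurable φ μ := by
  let basis := Module.finBasis 𝕜 E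
  let coord (i) : E →L[𝕜] 𝕜 := LinearMap.toContinuousLinearMap (basis.coord i)
  have expansion : φ = fun a => ∑ i, (coord i).smulRight (φ a (basis i)) := by
    funext a
    refine ContinuousLinearMap.coe_injective (basis.ext fun j => ?_)
    simp [coord, Finsupp.single_apply]
  rw [expansion]
  refine Finset.aestronglyMeasurable_fun_sum _ fun i _ => ?_
  exact (ContinuousLinearMap.smulRightL 𝕜 E F (coord i)).continuous.comp_aestronglyMeasurable
    (hφ (basis i))

lemma aestronglyMeasurable_fderiv_apply {𝕜 : Type*} [RCLike 𝕜] [NormedSpace 𝕜 E]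
    [NormedSpace 𝕜 F] {f : E → X → F} {p : E}
    (hmeas : ∀ᶠ q in 𝓝 p, AEStronglyMeasurable (f q) μ)
    (hdiff : ∀ᵐ a ∂μ, DifferentiableAt 𝕜 (f · a) p) (v : E) :
    AEStronglyMeasurable (fun a => fderiv 𝕜 (f · a) p v) μ := by
  have tendsto_step : Tendsto (fun n : ℕ => p + (n : 𝕜)⁻¹ • v) atTop (𝓝 p) := by
    simpa using ((tendsto_inv_atTop_nhds_zero_nat (𝕜 := 𝕜)).smul_const v).const_add p
  obtain ⟨N, hN⟩ := (tendsto_step.eventually hmeas).exists_forall_of_atTop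
  have tendsto_slope : ∀ᵐ a ∂μ, Tendsto
      (fun n : ℕ => ((n + N : ℕ) : 𝕜) • (f (p + ((n + N : ℕ) : 𝕜)⁻¹ • v) a - f p a)) atTop
      (𝓝 (fderiv 𝕜 (f · a) p v)) := by
    filter_upwards [hdiff] with a ha
    refine ha.hasFDerivAt.lim v ?_
    simpa only [RCLike.norm_natCast, Function.comp_def] using
      (tendsto_natCast_atTop_atTop (R := ℝ)).comp (tendsto_add_atTop_nat N)
  exact aestronglyMeasurable_of_tendsto_ae atTop
    (fun n => ((hN (n + N) (Nat.le_add_left N n)).sub hmeas.self_of_nhds).const_smul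
      ((n + N : ℕ) : 𝕜)) tendsto_slope

/-- The Schwarz lemma turns the bound on the integrand into the Lipschitz bound required for
differentiating under the integral sign, so that no bound on derivatives has to be assumed. -/
theorem differentiableOn_integral_of_dominated [NormedSpace ℂ E] [FiniteDimensional ℂ E]
    [NormedSpace ℂ F] {f : E → X → F} {U : Set E} (hU : IsOpen U) {bound : X → ℝ}
    (hbound : Integrable bound μ) (hmeas : ∀ p ∈ U, AEStronglyMeasurable (f p) μ)
    (hdiff : ∀ᵐ a ∂μ, DifferentiableOn ℂ (f · a) U)
    (hle : ∀ᵐ a ∂μ, ∀ p ∈ U, ‖f p a‖ ≤ bound a) :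
    DifferentiableOn ℂ (fun p => ∫ a, f p a ∂μ) U := by
  intro p hp
  obtain ⟨r, hr, hball⟩ := Metric.isOpen_iff.1 hU p hp
  have hdiffAt : ∀ᵐ a ∂μ, DifferentiableAt ℂ (f · a) p :=
    hdiff.mono fun a ha => ha.differentiableAt (hU.mem_nhds hp)
  have fderiv_meas : AEStronglyMeasurable (fun a => fderiv ℂ (f · a) p) μ :=
    aestronglyMeasurable_clm_of_apply (aestronglyMeasurable_fderiv_apply
      (eventually_of_mem (hU.mem_nhds hp) hmeas) hdiffAt)
  have lipschitz : ∀ᵐ a ∂μ, ∀ q ∈ Metric.ball p r,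
      ‖f q a - f p a‖ ≤ 2 * bound a / r * ‖q - p‖ := by
    filter_upwards [hdiff, hle] with a hda hla q hq
    have mapsTo : Set.MapsTo (f · a) (Metric.ball p r) (Metric.closedBall (f p a) (2 * bound a)) :=
      fun q hq => by
        rw [mem_closedBall_iff_norm, two_mul]
        exact (norm_sub_le _ _).trans (add_le_add (hla q (hball hq)) (hla p hp))
    simpa only [dist_eq_norm] using
      Complex.dist_le_div_mul_dist_of_mapsTo_ball (hda.mono hball) mapsTo hq
  exact (hasFDerivAt_integral_of_dominated_loc_of_lip' (Metric.ball_mem_nhds p hr)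
    (fun q hq => hmeas q (hball hq)) (hbound.mono' (hmeas p hp) (hle.mono fun a ha => ha p hp))
    fderiv_meas lipschitz ((hbound.const_mul 2).div_const r)
    (hdiffAt.mono fun a ha => ha.hasFDerivAt)).2.differentiableAt.differentiableWithinAt

end ParametricIntegral

section TubeDomain

variable {ι E : Type*}

/-- The tube `ℝ^ι + iΩ` in `ℂ^ι` over a set `Ω` of imaginary parts. -/
def tubeDomain (Ω : Set (ι → ℝ)) : Set (ι → ℂ) := {x | (fun i => (x i).im) ∈ Ω}

variable [Finite ι] {Ω : Set (ι → ℝ)} [NormedAddCommGroup E] [NormedSpace ℂ E] [CompleteSpace E]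

/-- For `x = u + iv` in the tube, `t ↦ f (u + tv) - g (u + tv)` is holomorphic on the convex set
of those `t` with `Im t • v ∈ Ω` and vanishes for real `t`; hence it vanishes at `t = i`. -/
theorem eqOn_tubeDomain_of_forall_real (hopen : IsOpen Ω) (hconv : Convex ℝ Ω) (hzero : 0 ∈ Ω)
    {f g : (ι → ℂ) → E} (hf : DifferentiableOn ℂ f (tubeDomain Ω))
    (hg : DifferentiableOn ℂ g (tubeDomain Ω))
    (heq : ∀ u : ι → ℝ, f (fun i => (u i : ℂ)) = g (fun i => (u i : ℂ))) :
    Set.EqOn f g (tubeDomain Ω) := by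
  cases nonempty_fintype ι
  intro x hx
  let line (t : ℂ) : ι → ℂ := fun i => (x i).re + t * (x i).im
  let T : Set ℂ := {t | t.im • (fun i => (x i).im) ∈ Ω}
  have isOpen_T : IsOpen T := hopen.preimage (by fun_prop)
  have convex_T : Convex ℝ T :=
    hconv.linear_preimage (Complex.imLm.smulRight fun i => (x i).im)
  have mapsTo_line : Set.MapsTo line T (tubeDomain Ω) := fun t ht => by
    simpa [tubeDomain, line, T, Pi.smul_def] using ht
  have differentiable_line : Differentiable ℂ line := by fun_prop
  have analytic {h : (ι → ℂ) → E} (hh : DifferentiableOn ℂ h (tubeDomain Ω)) :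
      AnalyticOnNhd ℂ (h ∘ line) T :=
    (hh.comp differentiable_line.differentiableOn mapsTo_line).analyticOnNhd isOpen_T
  have eq_on_real (s : ℝ) : (f ∘ line) s = (g ∘ line) s := by
    simpa [line] using heq fun i => (x i).re + s * (x i).im
  have tendsto_ofReal : Filter.Tendsto ((↑) : ℝ → ℂ) (nhdsWithin 0 {0}ᶜ) (nhdsWithin 0 {0}ᶜ) :=
    Complex.continuous_ofReal.continuousWithinAt.tendsto_nhdsWithin fun s hs => by simpa using hs
  have frequently_eq : ∃ᶠ t in nhdsWithin (0 : ℂ) {0}ᶜ, (f ∘ line) t = (g ∘ line) t :=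
    tendsto_ofReal.frequently (Filter.Eventually.of_forall eq_on_real).frequently
  have line_I : line I = x := by
    funext i
    simp [line, mul_comm I, Complex.re_add_im]
  have := (analytic hf).eqOn_of_preconnected_of_frequently_eq (analytic hg)
    convex_T.isPreconnected (z₀ := 0) (by simpa [T] using hzero) frequently_eq
    (show I ∈ T by simpa [T, tubeDomain] using hx)
  simpa only [Function.comp_apply, line_I] using this

end TubeDomain

section ElementaryBounds

lemma norm_exp_mul_I_le_exp_abs_im (w : ℂ) : ‖Complex.exp (w * I)‖ ≤ Real.exp |w.im| := by
  rw [Complex.norm_exp]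
  simpa using neg_le_abs w.im

lemma norm_sin_le_exp_abs_im (w : ℂ) : ‖Complex.sin w‖ ≤ Real.exp |w.im| := by
  have hneg := norm_exp_mul_I_le_exp_abs_im (-w)
  rw [Complex.neg_im, abs_neg] at hneg
  calc ‖Complex.sin w‖ = ‖Complex.exp (-w * I) - Complex.exp (w * I)‖ / 2 := by
        simp [Complex.sin]
    _ ≤ (Real.exp |w.im| + Real.exp |w.im|) / 2 := by
        gcongr
        exact (norm_sub_le _ _).trans (add_le_add hneg (norm_exp_mul_I_le_exp_abs_im w))
    _ = Real.exp |w.im| := add_self_div_two _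

lemma norm_sin_sub_self_le (w : ℂ) : ‖Complex.sin w - w‖ ≤ ‖w‖ ^ 3 * Real.exp ‖w‖ := by
  let remainder (u : ℂ) : ℂ := Complex.exp u - ∑ m ∈ Finset.range 3, u ^ m / (m.factorial : ℂ)
  have norm_remainder_le (u : ℂ) : ‖remainder u‖ ≤ ‖u‖ ^ 3 * Real.exp ‖u‖ :=
    Complex.norm_exp_sub_sum_le_norm_mul_exp u 3
  have sin_sub_self : Complex.sin w - w = (remainder (-w * I) - remainder (w * I)) * I / 2 := by
    simp only [remainder, Complex.sin, Finset.sum_range_succ, Finset.sum_range_zero,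
      Nat.factorial, pow_zero, pow_one, mul_pow, I_sq]
    linear_combination -w * I_mul_I
  calc ‖Complex.sin w - w‖ = ‖remainder (-w * I) - remainder (w * I)‖ / 2 := by
        rw [sin_sub_self]; simp
    _ ≤ (‖w‖ ^ 3 * Real.exp ‖w‖ + ‖w‖ ^ 3 * Real.exp ‖w‖) / 2 := by
        gcongr
        refine (norm_sub_le _ _).trans (add_le_add ?_ ?_)
        · simpa using norm_remainder_le (-w * I)
        · simpa using norm_remainder_le (w * I)
    _ = ‖w‖ ^ 3 * Real.exp ‖w‖ := add_self_div_two _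

lemma sinh_le_self_mul_cosh {x : ℝ} (hx : 0 ≤ x) : Real.sinh x ≤ x * Real.cosh x := by
  have deriv_eq (t : ℝ) :
      HasDerivAt (fun t => t * Real.cosh t - Real.sinh t) (t * Real.sinh t) t := by
    simpa using ((hasDerivAt_id' t).fun_mul (Real.hasDerivAt_cosh t)).fun_sub
      (Real.hasDerivAt_sinh t)
  have mono : MonotoneOn (fun t => t * Real.cosh t - Real.sinh t) (Set.Ici 0) := by
    refine monotoneOn_of_deriv_nonneg (convex_Ici 0) (by fun_prop) (by fun_prop) fun t ht => ?_
    rw [interior_Ici] at ht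
    rw [(deriv_eq t).deriv]
    exact mul_nonneg ht.le (Real.sinh_nonneg_iff.2 ht.le)
  simpa using mono Set.self_mem_Ici hx hx

lemma sinh_mul_sinh_le {p q : ℝ} (hp : 0 ≤ p) (hq : 0 ≤ q) :
    Real.sinh p * Real.sinh q ≤ p * q * Real.exp ((p ^ 2 + q ^ 2) / 2) := by
  have sinh_le {x : ℝ} (hx : 0 ≤ x) : Real.sinh x ≤ x * Real.exp (x ^ 2 / 2) :=
    (sinh_le_self_mul_cosh hx).trans (by gcongr; exact Real.cosh_le_exp_half_sq x)
  calc Real.sinh p * Real.sinh q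
      ≤ (p * Real.exp (p ^ 2 / 2)) * (q * Real.exp (q ^ 2 / 2)) :=
        mul_le_mul (sinh_le hp) (sinh_le hq) (Real.sinh_nonneg_iff.2 hq) (by positivity)
    _ = p * q * Real.exp ((p ^ 2 + q ^ 2) / 2) := by
        rw [add_div, Real.exp_add]; ring

lemma mul_le_sinh_mul_sinh {p q : ℝ} (hp : 0 ≤ p) (hq : 0 ≤ q) :
    p * q ≤ Real.sinh p * Real.sinh q :=
  mul_le_mul (Real.self_le_sinh_iff.2 hp) (Real.self_le_sinh_iff.2 hq) hq
    (Real.sinh_nonneg_iff.2 hp)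

lemma abs_inv_sinh_mul_sinh_sub_inv_mul_le {p q : ℝ} (hp : 0 < p) (hq : 0 < q) :
    |(Real.sinh p * Real.sinh q)⁻¹ - (p * q)⁻¹| ≤ (p ^ 2 + q ^ 2) / (2 * (p * q)) := by
  have hpq : 0 < p * q := mul_pos hp hq
  have hS : 0 < Real.sinh p * Real.sinh q :=
    mul_pos (Real.sinh_pos_iff.2 hp) (Real.sinh_pos_iff.2 hq)
  have inv_le : (Real.sinh p * Real.sinh q)⁻¹ ≤ (p * q)⁻¹ :=
    inv_anti₀ hpq (mul_le_sinh_mul_sinh hp.le hq.le)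
  have le_inv : (p * q)⁻¹ * (1 - (p ^ 2 + q ^ 2) / 2) ≤ (Real.sinh p * Real.sinh q)⁻¹ :=
    calc (p * q)⁻¹ * (1 - (p ^ 2 + q ^ 2) / 2)
        ≤ (p * q)⁻¹ * Real.exp (-((p ^ 2 + q ^ 2) / 2)) := by
          gcongr; exact Real.one_sub_le_exp_neg _
      _ = (p * q * Real.exp ((p ^ 2 + q ^ 2) / 2))⁻¹ := by rw [Real.exp_neg, ← mul_inv]
      _ ≤ (Real.sinh p * Real.sinh q)⁻¹ := inv_anti₀ hS (sinh_mul_sinh_le hp.le hq.le)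
  rw [abs_sub_comm, abs_of_nonneg (sub_nonneg.2 inv_le)]
  calc (p * q)⁻¹ - (Real.sinh p * Real.sinh q)⁻¹
      ≤ (p * q)⁻¹ - (p * q)⁻¹ * (1 - (p ^ 2 + q ^ 2) / 2) := sub_le_sub_left le_inv _
    _ = (p ^ 2 + q ^ 2) / (2 * (p * q)) := by field_simp; ring

lemma exp_mul_le_sinh {c y : ℝ} (hc : 0 ≤ c) (hy : 1 ≤ y) :
    (1 - Real.exp (-2 * c)) / 2 * Real.exp (c * y) ≤ Real.sinh (c * y) := by
  have : Real.exp (-(c * y)) ≤ Real.exp (-2 * c) * Real.exp (c * y) := by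
    rw [← Real.exp_add, Real.exp_le_exp]
    nlinarith
  rw [Real.sinh_eq]
  linarith

lemma exp_neg_mul_le_inv_one_add_sq {δ y : ℝ} (hδ : 0 < δ) (hy : 0 ≤ y) :
    Real.exp (-(δ * y)) ≤ (1 + 2 / δ ^ 2) * (1 + y ^ 2)⁻¹ := by
  rw [Real.exp_neg, ← div_eq_mul_inv, le_div_iff₀ (by positivity),
    inv_mul_le_iff₀ (Real.exp_pos _)]
  calc 1 + y ^ 2 ≤ 1 + y ^ 2 + ((δ * y) ^ 2 / 2 + 2 / δ ^ 2) :=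
        le_add_of_nonneg_right (by positivity)
    _ = (1 + (δ * y) ^ 2 / 2) * (1 + 2 / δ ^ 2) := by field_simp; ring
    _ ≤ Real.exp (δ * y) * (1 + 2 / δ ^ 2) := by
        gcongr
        linarith [Real.quadratic_le_exp_of_nonneg (mul_nonneg hδ.le hy), mul_nonneg hδ.le hy]

lemma one_le_two_mul_inv_one_add_sq {y : ℝ} (hy : 0 ≤ y) (hy1 : y ≤ 1) :
    1 ≤ 2 * (1 + y ^ 2)⁻¹ := by
  rw [← div_eq_mul_inv, one_le_div (by positivity)]
  nlinarith

lemma inv_sq_le_two_mul_inv_one_add_sq {y : ℝ} (hy : 1 ≤ y) :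
    (y ^ 2)⁻¹ ≤ 2 * (1 + y ^ 2)⁻¹ := by
  rw [← div_eq_mul_inv, inv_le_iff_one_le_mul₀ (by positivity), div_mul_eq_mul_div,
    one_le_div (by positivity)]
  nlinarith

lemma sub_half_mul_abs_add_sub_add_half_mul_abs_sub_le {β : ℝ} (hβ : 0 ≤ β) (v x t : ℝ) :
    (v - β / 2) * |x + t| - (v + β / 2) * |x - t| ≤ 2 * (|v| * |t|) - β * |x| := by
  have diff_le : |(|x + t| - |x - t|)| ≤ 2 * |t| := by
    have := abs_abs_sub_abs_le (x + t) (x - t)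
    rwa [show x + t - (x - t) = 2 * t by ring, abs_mul, abs_two] at this
  have le_sum : 2 * |x| ≤ |x + t| + |x - t| := by
    have := abs_add_le (x + t) (x - t)
    rwa [show x + t + (x - t) = 2 * x by ring, abs_mul, abs_two] at this
  have first_le : v * (|x + t| - |x - t|) ≤ |v| * (2 * |t|) := by
    refine (le_abs_self _).trans ?_
    rw [abs_mul]
    gcongr
  linarith [mul_le_mul_of_nonneg_left le_sum hβ]

end ElementaryBounds

section SincSq

lemma integrableOn_sinc_sq : IntegrableOn (fun x => Real.sinc x ^ 2) (Set.Ioi 0) := by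
  refine Integrable.mono' (integrable_inv_one_add_sq.integrableOn.const_mul 2)
    (Real.continuous_sinc.pow 2).aestronglyMeasurable ?_
  filter_upwards [ae_restrict_mem measurableSet_Ioi] with x (hx : 0 < x)
  rw [Real.norm_of_nonneg (sq_nonneg _), ← div_eq_mul_inv, le_div_iff₀ (by positivity)]
  have sinc_le : Real.sinc x ^ 2 ≤ 1 := (sq_le_one_iff_abs_le_one _).2 (Real.abs_sinc_le_one x)
  have mul_sinc_le : Real.sinc x ^ 2 * x ^ 2 ≤ 1 := by
    rw [Real.sinc_of_ne_zero hx.ne', ← mul_pow, div_mul_cancel₀ _ hx.ne']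
    exact Real.sin_sq_le_one x
  linarith

lemma integral_sinc_sq_pos : 0 < ∫ x in Set.Ioi (0 : ℝ), Real.sinc x ^ 2 := by
  rw [setIntegral_pos_iff_support_of_nonneg_ae (.of_forall fun x => sq_nonneg _)
    integrableOn_sinc_sq]
  have subset : Set.Ioo (0 : ℝ) 1 ⊆ Function.support (fun x => Real.sinc x ^ 2) ∩ Set.Ioi 0 := by
    refine fun x hx => ⟨?_, hx.1⟩
    have sin_pos : 0 < Real.sin x := Real.sin_pos_of_mem_Ioo
      ⟨hx.1, hx.2.trans (by linarith [Real.pi_gt_three])⟩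
    rw [Function.mem_support, Real.sinc_of_ne_zero hx.1.ne']
    exact pow_ne_zero 2 (div_pos sin_pos hx.1).ne'
  exact (by simp : 0 < volume (Set.Ioo (0 : ℝ) 1)).trans_le (measure_mono subset)

lemma sinc_abs_mul (s y : ℝ) : Real.sinc (|s| * y) = Real.sinc (s * y) := by
  rcases abs_choice s with h | h <;> simp [h]

lemma integrableOn_sq_mul_sinc_sq (s : ℝ) :
    IntegrableOn (fun y => s ^ 2 * Real.sinc (s * y) ^ 2) (Set.Ioi 0) := by
  rcases eq_or_ne s 0 with rfl | hs
  · simp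
  · have := (integrableOn_Ioi_comp_mul_left_iff (fun x => Real.sinc x ^ 2) 0 (abs_pos.2 hs)).2
      (by simpa using integrableOn_sinc_sq)
    simpa only [IntegrableOn, sinc_abs_mul] using this.const_mul (s ^ 2)

lemma integral_sq_mul_sinc_sq (s : ℝ) :
    ∫ y in Set.Ioi (0 : ℝ), s ^ 2 * Real.sinc (s * y) ^ 2 =
      |s| * ∫ x in Set.Ioi (0 : ℝ), Real.sinc x ^ 2 := by
  rcases eq_or_ne s 0 with rfl | hs
  · simp
  · have := integral_comp_mul_left_Ioi (fun x => Real.sinc x ^ 2) 0 (abs_pos.2 hs)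
    simp only [sinc_abs_mul, mul_zero, smul_eq_mul] at this
    rw [integral_const_mul, this, ← sq_abs s]
    field_simp

lemma one_sub_cos_two_mul_eq_sinc_sq (t : ℝ) :
    1 - Real.cos (2 * t) = 2 * (t * Real.sinc t) ^ 2 := by
  have mul_sinc : t * Real.sinc t = Real.sin t := by
    rcases eq_or_ne t 0 with rfl | ht
    · simp
    · rw [Real.sinc_of_ne_zero ht, mul_div_cancel₀ _ ht]
  rw [mul_sinc, Real.cos_two_mul, Real.cos_sq']
  ring

end SincSq

section HyperbolicGamma

variable {ap am : ℝ}

/-- The integrand of `ghyp`. -/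
noncomputable def ghypKernel (ap am : ℝ) (z : ℂ) (y : ℝ) : ℂ :=
  (1 / (y : ℂ)) *
    (Complex.sin (2 * (y : ℂ) * z) /
        (2 * Complex.sinh ((ap : ℂ) * (y : ℂ)) * Complex.sinh ((am : ℂ) * (y : ℂ))) -
      z / ((ap : ℂ) * (am : ℂ) * (y : ℂ)))

lemma measurable_ghypKernel (ap am : ℝ) (z : ℂ) : Measurable (ghypKernel ap am z) := by
  unfold ghypKernel
  fun_prop

lemma differentiable_ghypKernel (ap am y : ℝ) :
    Differentiable ℂ fun z => ghypKernel ap am z y := by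
  simp only [ghypKernel, div_eq_mul_inv (Complex.sin _), div_eq_mul_inv (_ : ℂ) (_ * _ * _)]
  fun_prop

lemma ghypKernel_eq_ofReal (ap am : ℝ) (z : ℂ) (y : ℝ) :
    ghypKernel ap am z y = ((1 / y : ℝ) : ℂ) *
      (Complex.sin (2 * y * z) / ((2 * (Real.sinh (ap * y) * Real.sinh (am * y)) : ℝ) : ℂ) -
        z / ((ap * am * y : ℝ) : ℂ)) := by
  rw [ghypKernel]
  push_cast
  rw [mul_assoc 2 (Complex.sinh _)]

/-- Both summands stay bounded as `y → 0`: the poles of the two terms of the kernel cancel. -/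
lemma ghypKernel_eq_add (hap : 0 < ap) (ham : 0 < am) (z : ℂ) {y : ℝ} (hy : 0 < y) :
    ghypKernel ap am z y =
      (Complex.sin (2 * y * z) - 2 * y * z) /
          ((2 * (Real.sinh (ap * y) * Real.sinh (am * y)) * y : ℝ) : ℂ) +
        z * (((Real.sinh (ap * y) * Real.sinh (am * y))⁻¹ - (ap * y * (am * y))⁻¹ : ℝ) : ℂ) := by
  have sinh_ne_zero {c : ℝ} (hc : 0 < c) : (Real.sinh (c * y) : ℂ) ≠ 0 :=
    ofReal_ne_zero.2 (Real.sinh_pos_iff.2 (mul_pos hc hy)).ne'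
  have hap' : (ap : ℂ) ≠ 0 := ofReal_ne_zero.2 hap.ne'
  have ham' : (am : ℂ) ≠ 0 := ofReal_ne_zero.2 ham.ne'
  have hy' : (y : ℂ) ≠ 0 := ofReal_ne_zero.2 hy.ne'
  rw [ghypKernel_eq_ofReal]
  simp only [ofReal_div, ofReal_mul, ofReal_sub, ofReal_inv, ofReal_one, ofReal_ofNat]
  field_simp [sinh_ne_zero hap, sinh_ne_zero ham]
  ring

lemma norm_ghypKernel_le_of_le_one (hap : 0 < ap) (ham : 0 < am) (z : ℂ) {y : ℝ} (hy : 0 < y)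
    (hy1 : y ≤ 1) :
    ‖ghypKernel ap am z y‖ ≤ 4 * ‖z‖ ^ 3 * Real.exp (2 * ‖z‖) / (ap * am) +
      ‖z‖ * ((ap ^ 2 + am ^ 2) / (2 * (ap * am))) := by
  have hp : 0 < ap * y := by positivity
  have hm : 0 < am * y := by positivity
  have norm_arg : ‖2 * (y : ℂ) * z‖ = 2 * y * ‖z‖ := by simp [abs_of_pos hy]
  have sin_le : ‖Complex.sin (2 * y * z) - 2 * y * z‖ ≤
      (2 * y * ‖z‖) ^ 3 * Real.exp (2 * ‖z‖) := by
    refine (norm_sin_sub_self_le _).trans ?_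
    rw [norm_arg]
    gcongr
    nlinarith [norm_nonneg z]
  rw [ghypKernel_eq_add hap ham z hy]
  refine (norm_add_le _ _).trans (add_le_add ?_ ?_)
  · rw [norm_div, Complex.norm_of_nonneg (by positivity)]
    calc _ ≤ (2 * y * ‖z‖) ^ 3 * Real.exp (2 * ‖z‖) / (2 * (ap * y * (am * y)) * y) := by
          gcongr ?_ / (2 * ?_ * y)
          exact mul_le_sinh_mul_sinh hp.le hm.le
      _ = 4 * ‖z‖ ^ 3 * Real.exp (2 * ‖z‖) / (ap * am) := by field_simp; ring
  · rw [norm_mul, Complex.norm_real, Real.norm_eq_abs]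
    gcongr
    refine (abs_inv_sinh_mul_sinh_sub_inv_mul_le hp hm).trans_eq ?_
    field_simp

lemma norm_sin_div_sinh_mul_sinh_le (hap : 0 < ap) (ham : 0 < am) (z : ℂ) {y : ℝ} (hy : 1 ≤ y) :
    ‖Complex.sin (2 * y * z) / ((2 * (Real.sinh (ap * y) * Real.sinh (am * y)) : ℝ) : ℂ)‖ ≤
      2 / ((1 - Real.exp (-2 * ap)) * (1 - Real.exp (-2 * am))) *
        Real.exp (-((ap + am - 2 * |z.im|) * y)) := by
  have one_sub_exp_pos {c : ℝ} (hc : 0 < c) : 0 < 1 - Real.exp (-2 * c) :=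
    sub_pos.2 (Real.exp_lt_one_iff.2 (by linarith))
  have hkp := one_sub_exp_pos hap
  have hkm := one_sub_exp_pos ham
  have le_sinh : (1 - Real.exp (-2 * ap)) / 2 * Real.exp (ap * y) *
      ((1 - Real.exp (-2 * am)) / 2 * Real.exp (am * y)) ≤
      Real.sinh (ap * y) * Real.sinh (am * y) :=
    mul_le_mul (exp_mul_le_sinh hap.le hy) (exp_mul_le_sinh ham.le hy)
      (by positivity) (Real.sinh_nonneg_iff.2 (by positivity))
  have sin_le : ‖Complex.sin (2 * y * z)‖ ≤ Real.exp (2 * |z.im| * y) := by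
    refine (norm_sin_le_exp_abs_im _).trans_eq ?_
    have : (2 * (y : ℂ) * z).im = 2 * y * z.im := by simp
    rw [this, abs_mul, abs_of_pos (by positivity)]
    ring_nf
  rw [norm_div, Complex.norm_of_nonneg ((by positivity : (0 : ℝ) ≤ _).trans
    (mul_le_mul_of_nonneg_left le_sinh zero_le_two))]
  calc _ ≤ Real.exp (2 * |z.im| * y) / (2 * ((1 - Real.exp (-2 * ap)) / 2 * Real.exp (ap * y) *
        ((1 - Real.exp (-2 * am)) / 2 * Real.exp (am * y)))) := by gcongr
    _ = _ := by
      rw [show -((ap + am - 2 * |z.im|) * y) = 2 * |z.im| * y - (ap * y + am * y) by ring,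
        Real.exp_sub, Real.exp_add]
      field_simp

lemma norm_ghypKernel_le_of_one_le (hap : 0 < ap) (ham : 0 < am) (z : ℂ) {y : ℝ} (hy : 1 ≤ y) :
    ‖ghypKernel ap am z y‖ ≤
      2 / ((1 - Real.exp (-2 * ap)) * (1 - Real.exp (-2 * am))) *
          Real.exp (-((ap + am - 2 * |z.im|) * y)) +
        ‖z‖ / (ap * am) * (y ^ 2)⁻¹ := by
  have hy0 : 0 < y := by positivity
  rw [ghypKernel_eq_ofReal, mul_sub]
  refine (norm_sub_le _ _).trans (add_le_add ?_ (le_of_eq ?_))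
  · rw [norm_mul, Complex.norm_of_nonneg (by positivity)]
    exact (mul_le_of_le_one_left (norm_nonneg _) ((div_le_one hy0).2 hy)).trans
      (norm_sin_div_sinh_mul_sinh_le hap ham z hy)
  · rw [norm_mul, norm_div, Complex.norm_of_nonneg (by positivity),
      Complex.norm_of_nonneg (by positivity)]
    field_simp

lemma exists_norm_ghypKernel_le (hap : 0 < ap) (ham : 0 < am) (R : ℝ) {τ : ℝ}
    (hτ : τ < (ap + am) / 2) :
    ∃ C, ∀ z : ℂ, ‖z‖ ≤ R → |z.im| ≤ τ → ∀ y : ℝ, 0 < y →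
      ‖ghypKernel ap am z y‖ ≤ C * (1 + y ^ 2)⁻¹ := by
  set A := 4 * R ^ 3 * Real.exp (2 * R) / (ap * am) + R * ((ap ^ 2 + am ^ 2) / (2 * (ap * am)))
  set K := 2 / ((1 - Real.exp (-2 * ap)) * (1 - Real.exp (-2 * am)))
  set δ := ap + am - 2 * τ
  have hδ : 0 < δ := by simp only [δ]; linarith
  refine ⟨max (A * 2) (K * (1 + 2 / δ ^ 2) + R / (ap * am) * 2), fun z hz him y hy => ?_⟩
  have hR : 0 ≤ R := (norm_nonneg z).trans hz
  rcases le_total y 1 with hy1 | hy1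
  · calc ‖ghypKernel ap am z y‖ ≤ A := by
          refine (norm_ghypKernel_le_of_le_one hap ham z hy hy1).trans ?_
          simp only [A]
          gcongr
      _ ≤ A * (2 * (1 + y ^ 2)⁻¹) := le_mul_of_one_le_right (by positivity)
          (one_le_two_mul_inv_one_add_sq hy.le hy1)
      _ = A * 2 * (1 + y ^ 2)⁻¹ := (mul_assoc _ _ _).symm
      _ ≤ _ := by gcongr; exact le_max_left _ _
  · have exp_le : Real.exp (-((ap + am - 2 * |z.im|) * y)) ≤
        (1 + 2 / δ ^ 2) * (1 + y ^ 2)⁻¹ := by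
      refine le_trans ?_ (exp_neg_mul_le_inv_one_add_sq hδ hy.le)
      gcongr
      simp only [δ]
      linarith
    have hK : 0 ≤ K := div_nonneg zero_le_two (mul_nonneg
      (sub_nonneg.2 (Real.exp_le_one_iff.2 (by linarith)))
      (sub_nonneg.2 (Real.exp_le_one_iff.2 (by linarith))))
    calc ‖ghypKernel ap am z y‖
        ≤ K * Real.exp (-((ap + am - 2 * |z.im|) * y)) + ‖z‖ / (ap * am) * (y ^ 2)⁻¹ :=
          norm_ghypKernel_le_of_one_le hap ham z hy1
      _ ≤ K * ((1 + 2 / δ ^ 2) * (1 + y ^ 2)⁻¹) + R / (ap * am) * (2 * (1 + y ^ 2)⁻¹) := by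
          gcongr
          exact inv_sq_le_two_mul_inv_one_add_sq hy1
      _ = (K * (1 + 2 / δ ^ 2) + R / (ap * am) * 2) * (1 + y ^ 2)⁻¹ := by ring
      _ ≤ _ := by gcongr; exact le_max_right _ _

lemma integrableOn_ghypKernel (hap : 0 < ap) (ham : 0 < am) {z : ℂ}
    (hz : |z.im| < (ap + am) / 2) : IntegrableOn (ghypKernel ap am z) (Set.Ioi 0) := by
  obtain ⟨C, hC⟩ := exists_norm_ghypKernel_le hap ham ‖z‖ hz
  refine Integrable.mono' (integrable_inv_one_add_sq.integrableOn.const_mul C)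
    (measurable_ghypKernel ap am z).aestronglyMeasurable ?_
  filter_upwards [ae_restrict_mem measurableSet_Ioi] with y hy using hC z le_rfl le_rfl y hy

lemma differentiableAt_ghyp (hap : 0 < ap) (ham : 0 < am) {z : ℂ}
    (hz : |z.im| < (ap + am) / 2) : DifferentiableAt ℂ (ghyp ap am) z := by
  obtain ⟨τ, hzτ, hτ⟩ := exists_between hz
  obtain ⟨C, hC⟩ := exists_norm_ghypKernel_le hap ham (‖z‖ + 1) hτ
  have isOpen_nhd : IsOpen {w : ℂ | ‖w‖ < ‖z‖ + 1 ∧ |w.im| < τ} :=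
    (isOpen_lt continuous_norm continuous_const).and
      (isOpen_lt Complex.continuous_im.abs continuous_const)
  have differentiableOn_ghyp :
      DifferentiableOn ℂ (ghyp ap am) {w : ℂ | ‖w‖ < ‖z‖ + 1 ∧ |w.im| < τ} := by
    refine differentiableOn_integral_of_dominated (f := ghypKernel ap am) isOpen_nhd
      (integrable_inv_one_add_sq.integrableOn.const_mul C)
      (fun w _ => (measurable_ghypKernel ap am w).aestronglyMeasurable)
      (.of_forall fun y => (differentiable_ghypKernel ap am y).differentiableOn) ?_
    filter_upwards [ae_restrict_mem measurableSet_Ioi] with y hy w hw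
    exact hC w hw.1.le hw.2.le y hy
  exact differentiableOn_ghyp.differentiableAt (isOpen_nhd.mem_nhds ⟨lt_add_one _, hzτ⟩)

lemma im_ghypKernel (ap am : ℝ) (z : ℂ) (y : ℝ) :
    (ghypKernel ap am z y).im =
      1 / y * (Real.cos (2 * y * z.re) * Real.sinh (2 * y * z.im) /
        (2 * (Real.sinh (ap * y) * Real.sinh (am * y))) - z.im / (ap * am * y)) := by
  have im_sin : (Complex.sin (2 * y * z)).im =
      Real.cos (2 * y * z.re) * Real.sinh (2 * y * z.im) := by
    have arg_eq : 2 * (y : ℂ) * z = (2 * y * z.re : ℝ) + (2 * y * z.im : ℝ) * I := by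
      apply Complex.ext <;> simp
    rw [arg_eq, Complex.sin_add_mul_I, ← ofReal_sin, ← ofReal_cos, ← ofReal_cosh, ← ofReal_sinh,
      ← ofReal_mul, ← ofReal_mul, add_im, ofReal_im, zero_add, im_ofReal_mul, I_im, mul_one]
  rw [ghypKernel_eq_ofReal, Complex.im_ofReal_mul, Complex.sub_im, Complex.div_ofReal_im,
    Complex.div_ofReal_im, im_sin]

/-- The first term is bounded in `Re z`; the second one produces the growth linear in `|Re z|`. -/
lemma im_ghypKernel_eq_cos_mul_sub_sinc_sq (ap am : ℝ) (z : ℂ) {y : ℝ} (hy : y ≠ 0) :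
    (ghypKernel ap am z y).im =
      Real.cos (2 * y * z.re) * (ghypKernel ap am (z.im * I) y).im -
        2 / (ap * am) * z.im * (z.re ^ 2 * Real.sinc (z.re * y) ^ 2) := by
  have cos_eq : Real.cos (2 * y * z.re) = 1 - 2 * (z.re * y * Real.sinc (z.re * y)) ^ 2 := by
    rw [← one_sub_cos_two_mul_eq_sinc_sq, sub_sub_cancel]
    ring_nf
  have im_eq : (ghypKernel ap am (z.im * I) y).im =
      1 / y * (Real.sinh (2 * y * z.im) / (2 * (Real.sinh (ap * y) * Real.sinh (am * y))) -
        z.im / (ap * am * y)) := by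
    simp [im_ghypKernel]
  rw [im_ghypKernel, im_eq, cos_eq]
  linear_combination -(2 / (ap * am) * z.im * (z.re ^ 2 * Real.sinc (z.re * y) ^ 2)) *
    (y * y⁻¹ + 1) * mul_inv_cancel₀ hy

/-- The constant `κ` with `Im g(z) = -κ Im z |Re z| + O(1)` on closed substrips. Its value is
`π / (a₊a₋) = α / 2`, since the integral equals `π / 2`, but only its positivity matters. -/
noncomputable def ghypRate (ap am : ℝ) : ℝ :=
  2 / (ap * am) * ∫ x in Set.Ioi (0 : ℝ), Real.sinc x ^ 2

lemma ghypRate_pos (hap : 0 < ap) (ham : 0 < am) : 0 < ghypRate ap am :=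
  mul_pos (by positivity) integral_sinc_sq_pos

theorem exists_abs_im_ghyp_add_le (hap : 0 < ap) (ham : 0 < am) {τ : ℝ}
    (hτ : τ < (ap + am) / 2) :
    ∃ M, ∀ z : ℂ, |z.im| ≤ τ →
      |(ghyp ap am z).im + ghypRate ap am * (z.im * |z.re|)| ≤ M := by
  obtain ⟨C, hC⟩ := exists_norm_ghypKernel_le hap ham τ hτ
  refine ⟨∫ y in Set.Ioi (0 : ℝ), C * (1 + y ^ 2)⁻¹, fun z hz => ?_⟩
  have majorant : IntegrableOn (fun y : ℝ => C * (1 + y ^ 2)⁻¹) (Set.Ioi 0) :=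
    integrable_inv_one_add_sq.integrableOn.const_mul C
  have remainder_le : ∀ᵐ y ∂volume.restrict (Set.Ioi (0 : ℝ)),
      ‖Real.cos (2 * y * z.re) * (ghypKernel ap am (z.im * I) y).im‖ ≤ C * (1 + y ^ 2)⁻¹ := by
    filter_upwards [ae_restrict_mem measurableSet_Ioi] with y hy
    rw [norm_mul]
    refine (mul_le_of_le_one_left (norm_nonneg _) (Real.abs_cos_le_one _)).trans ?_
    exact (Complex.abs_im_le_norm _).trans (hC _ (by simpa using hz) (by simpa using hz) y hy)
  have remainder_integrable : IntegrableOn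
      (fun y => Real.cos (2 * y * z.re) * (ghypKernel ap am (z.im * I) y).im) (Set.Ioi 0) := by
    refine majorant.mono' (Measurable.aestronglyMeasurable ?_) remainder_le
    have := measurable_ghypKernel ap am (z.im * I)
    fun_prop
  have im_ghyp : (ghyp ap am z).im = ∫ y in Set.Ioi (0 : ℝ), (ghypKernel ap am z y).im :=
    (integral_im (integrableOn_ghypKernel hap ham (hz.trans_lt hτ))).symm
  have remainder_eq : (ghyp ap am z).im + ghypRate ap am * (z.im * |z.re|) =
      ∫ y in Set.Ioi (0 : ℝ), Real.cos (2 * y * z.re) * (ghypKernel ap am (z.im * I) y).im := by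
    rw [im_ghyp, setIntegral_congr_fun measurableSet_Ioi fun y hy =>
        im_ghypKernel_eq_cos_mul_sub_sinc_sq ap am z (ne_of_gt hy),
      integral_sub remainder_integrable ((integrableOn_sq_mul_sinc_sq z.re).const_mul _),
      integral_const_mul, integral_sq_mul_sinc_sq, ghypRate]
    ring
  rw [remainder_eq]
  exact norm_integral_le_of_norm_le majorant remainder_le

end HyperbolicGamma

section HyperbolicGammaRatio

variable {ap am : ℝ}

lemma norm_Ghyp (ap am : ℝ) (z : ℂ) : ‖Ghyp ap am z‖ = Real.exp (-(ghyp ap am z).im) := by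
  rw [Ghyp, Complex.norm_exp, Complex.I_mul_re]

lemma differentiableAt_Ghyp (hap : 0 < ap) (ham : 0 < am) {z : ℂ}
    (hz : |z.im| < (ap + am) / 2) : DifferentiableAt ℂ (Ghyp ap am) z :=
  ((differentiableAt_ghyp hap ham hz).const_mul I).cexp

/-- The ratio `G(w - ib/2) / G(w + ib/2)`, each factor of the integrand of `J2` being such a ratio
at `w = x_j - z`. -/
noncomputable def ghypRatio (ap am : ℝ) (b w : ℂ) : ℂ :=
  Ghyp ap am (w - I * b / 2) / Ghyp ap am (w + I * b / 2)

lemma abs_im_sub_I_mul_half_le {b : ℂ} (hb : 0 ≤ b.re) (w : ℂ) :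
    |(w - I * b / 2).im| ≤ |w.im| + b.re / 2 := by
  have : (w - I * b / 2).im = w.im - b.re / 2 := by simp
  rw [this]
  exact (abs_sub _ _).trans_eq (by rw [abs_of_nonneg (by positivity : 0 ≤ b.re / 2)])

lemma abs_im_add_I_mul_half_le {b : ℂ} (hb : 0 ≤ b.re) (w : ℂ) :
    |(w + I * b / 2).im| ≤ |w.im| + b.re / 2 := by
  have : (w + I * b / 2).im = w.im + b.re / 2 := by simp
  rw [this]
  exact (abs_add_le _ _).trans_eq (by rw [abs_of_nonneg (by positivity : 0 ≤ b.re / 2)])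

lemma differentiableAt_ghypRatio (hap : 0 < ap) (ham : 0 < am) {b w : ℂ} (hb : 0 ≤ b.re)
    (hw : |w.im| + b.re / 2 < (ap + am) / 2) :
    DifferentiableAt ℂ (fun q : ℂ × ℂ => ghypRatio ap am q.1 q.2) (b, w) := by
  have hnum : DifferentiableAt ℂ (fun q : ℂ × ℂ => Ghyp ap am (q.2 - I * q.1 / 2)) (b, w) :=
    DifferentiableAt.comp (g := Ghyp ap am) (b, w)
      (differentiableAt_Ghyp hap ham ((abs_im_sub_I_mul_half_le hb w).trans_lt hw)) (by fun_prop)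
  have hden : DifferentiableAt ℂ (fun q : ℂ × ℂ => Ghyp ap am (q.2 + I * q.1 / 2)) (b, w) :=
    DifferentiableAt.comp (g := Ghyp ap am) (b, w)
      (differentiableAt_Ghyp hap ham ((abs_im_add_I_mul_half_le hb w).trans_lt hw)) (by fun_prop)
  simp only [ghypRatio, div_eq_mul_inv (Ghyp ap am _)]
  exact hnum.mul (hden.fun_inv (Complex.exp_ne_zero _))

theorem exists_norm_ghypRatio_le (hap : 0 < ap) (ham : 0 < am) {τ : ℝ}
    (hτ : τ < (ap + am) / 2) (Γ : ℝ) :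
    ∃ M, ∀ b w : ℂ, 0 ≤ b.re → |w.im| + b.re / 2 ≤ τ → |b.im| ≤ Γ →
      ‖ghypRatio ap am b w‖ ≤ Real.exp (M - ghypRate ap am * (b.re * |w.re|)) := by
  obtain ⟨M, hM⟩ := exists_abs_im_ghyp_add_le hap ham hτ
  refine ⟨2 * M + ghypRate ap am * (τ * Γ), fun b w hb hw hΓ => ?_⟩
  have num_bound := (abs_le.1 (hM _ ((abs_im_sub_I_mul_half_le hb w).trans hw))).1
  have den_bound := (abs_le.1 (hM _ ((abs_im_add_I_mul_half_le hb w).trans hw))).2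
  have im_num : (w - I * b / 2).im = w.im - b.re / 2 := by simp
  have im_den : (w + I * b / 2).im = w.im + b.re / 2 := by simp
  have re_num : (w - I * b / 2).re = w.re + b.im / 2 := by simp; ring
  have re_den : (w + I * b / 2).re = w.re - b.im / 2 := by simp; ring
  rw [im_num, re_num] at num_bound
  rw [im_den, re_den] at den_bound
  have im_mul_le : 2 * (|w.im| * |b.im / 2|) ≤ τ * Γ :=
    calc 2 * (|w.im| * |b.im / 2|) = |w.im| * |b.im| := by rw [abs_div, abs_two]; ring
      _ ≤ τ * Γ := by gcongr <;> linarith [abs_nonneg w.im]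
  have exponent_le := mul_le_mul_of_nonneg_left
    (sub_half_mul_abs_add_sub_add_half_mul_abs_sub_le hb w.im w.re (b.im / 2))
    (ghypRate_pos hap ham).le
  have rate_mul_le := mul_le_mul_of_nonneg_left im_mul_le (ghypRate_pos hap ham).le
  rw [ghypRatio, norm_div, norm_Ghyp, norm_Ghyp, ← Real.exp_sub, Real.exp_le_exp]
  linarith

end HyperbolicGammaRatio

section CentredIntegral

variable {ap am : ℝ}

/-- The integrand of `J2` in the centred case `x = (u, -u)`, where `p = (b, u)`; `c` stands for
`α (y₁ - y₂)`. -/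
noncomputable def centredIntegrand (ap am c : ℝ) (p : ℂ × ℂ) (z : ℝ) : ℂ :=
  Complex.exp (I * z * c) * (ghypRatio ap am p.1 (p.2 - z) * ghypRatio ap am p.1 (-p.2 - z))

/-- The pairs `(b, u)` with `(b, (u, -u)) ∈ D2`. -/
def centredDomain (ap am : ℝ) : Set (ℂ × ℂ) :=
  {p | 0 < p.1.re ∧ |p.2.im| + p.1.re / 2 < (ap + am) / 2}

lemma differentiableAt_ghypRatio_of_mem_centredDomain (hap : 0 < ap) (ham : 0 < am) {b u : ℂ}
    (hu : (b, u) ∈ centredDomain ap am) (z : ℝ) :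
    DifferentiableAt ℂ (fun q : ℂ × ℂ => ghypRatio ap am q.1 q.2) (b, u - z) :=
  differentiableAt_ghypRatio hap ham hu.1.le (by simpa using hu.2)

lemma mk_neg_mem_centredDomain {b u : ℂ} (hu : (b, u) ∈ centredDomain ap am) :
    (b, -u) ∈ centredDomain ap am := by
  simpa [centredDomain] using hu

lemma differentiableOn_centredIntegrand (hap : 0 < ap) (ham : 0 < am) (c z : ℝ) :
    DifferentiableOn ℂ (fun p => centredIntegrand ap am c p z) (centredDomain ap am) := by
  rintro ⟨b, u⟩ hu
  have hpos := (differentiableAt_ghypRatio_of_mem_centredDomain hap ham hu z).comp (b, u)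
    (f := fun p : ℂ × ℂ => (p.1, p.2 - z)) (by fun_prop)
  have hneg := (differentiableAt_ghypRatio_of_mem_centredDomain hap ham
    (mk_neg_mem_centredDomain hu) z).comp (b, u)
    (f := fun p : ℂ × ℂ => (p.1, -p.2 - z)) (by fun_prop)
  exact ((hpos.mul hneg).const_mul _).differentiableWithinAt

lemma continuous_centredIntegrand (hap : 0 < ap) (ham : 0 < am) (c : ℝ) {p : ℂ × ℂ}
    (hp : p ∈ centredDomain ap am) : Continuous (centredIntegrand ap am c p) := by
  have hratio {u : ℂ} (hu : (p.1, u) ∈ centredDomain ap am) :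
      Continuous fun z : ℝ => ghypRatio ap am p.1 (u - z) := by
    refine continuous_iff_continuousAt.2 fun z => ?_
    exact (differentiableAt_ghypRatio_of_mem_centredDomain hap ham hu z).continuousAt.comp
      (f := fun z : ℝ => (p.1, u - z)) (by fun_prop)
  have hphase : Continuous fun z : ℝ => Complex.exp (I * z * c) := by fun_prop
  exact hphase.mul ((hratio hp).mul (hratio (mk_neg_mem_centredDomain hp)))

lemma exists_norm_centredIntegrand_le (hap : 0 < ap) (ham : 0 < am) (c : ℝ) {β τ : ℝ}
    (hβ : 0 < β) (hτ : τ < (ap + am) / 2) (Γ : ℝ) :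
    ∃ C, ∀ b u : ℂ, β ≤ b.re → |u.im| + b.re / 2 ≤ τ → |b.im| ≤ Γ → ∀ z : ℝ,
      ‖centredIntegrand ap am c (b, u) z‖ ≤ C * (1 + z ^ 2)⁻¹ := by
  obtain ⟨M, hM⟩ := exists_norm_ghypRatio_le hap ham hτ Γ
  set δ := ghypRate ap am * (β * 2)
  have hδ : 0 < δ := mul_pos (ghypRate_pos hap ham) (by positivity)
  refine ⟨Real.exp (M + M) * (1 + 2 / δ ^ 2), fun b u hb hu hΓ z => ?_⟩
  have norm_phase : ‖Complex.exp (I * z * c)‖ = 1 := by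
    rw [mul_assoc, ← ofReal_mul, norm_exp_I_mul_ofReal]
  have ratio_pos := hM b (u - z) (hβ.le.trans hb) (by simpa using hu) hΓ
  have ratio_neg := hM b (-u - z) (hβ.le.trans hb) (by simpa using hu) hΓ
  have re_bound : 2 * |z| ≤ |(u - z).re| + |(-u - z).re| := by
    have := abs_add_le (u - z).re (-u - z).re
    rwa [show (u - z).re + (-u - z).re = -(2 * z) by simp; ring, abs_neg, abs_mul, abs_two] at this
  have exponent_le : δ * |z| ≤ ghypRate ap am * (b.re * (|(u - z).re| + |(-u - z).re|)) := by
    rw [mul_assoc, mul_assoc]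
    have := (ghypRate_pos hap ham).le
    have := hβ.le.trans hb
    gcongr
  calc ‖centredIntegrand ap am c (b, u) z‖
      = ‖ghypRatio ap am b (u - z)‖ * ‖ghypRatio ap am b (-u - z)‖ := by
        rw [centredIntegrand, norm_mul, norm_phase, one_mul, norm_mul]
    _ ≤ Real.exp (M - ghypRate ap am * (b.re * |(u - z).re|)) *
          Real.exp (M - ghypRate ap am * (b.re * |(-u - z).re|)) := by gcongr
    _ ≤ Real.exp (M + M) * Real.exp (-(δ * |z|)) := by
        rw [← Real.exp_add, ← Real.exp_add, Real.exp_le_exp]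
        linarith
    _ ≤ Real.exp (M + M) * ((1 + 2 / δ ^ 2) * (1 + |z| ^ 2)⁻¹) := by
        gcongr
        exact exp_neg_mul_le_inv_one_add_sq hδ (abs_nonneg z)
    _ = _ := by rw [sq_abs, mul_assoc]

theorem differentiableOn_integral_centredIntegrand (hap : 0 < ap) (ham : 0 < am) (c : ℝ) :
    DifferentiableOn ℂ (fun p => ∫ z : ℝ, centredIntegrand ap am c p z)
      (centredDomain ap am) := by
  intro p₀ hp₀
  obtain ⟨β, hβ, hβp₀⟩ := exists_between hp₀.1
  obtain ⟨τ, hp₀τ, hτ⟩ := exists_between hp₀.2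
  obtain ⟨C, hC⟩ := exists_norm_centredIntegrand_le hap ham c hβ hτ (|p₀.1.im| + 1)
  let U : Set (ℂ × ℂ) := {p | β < p.1.re ∧ |p.2.im| + p.1.re / 2 < τ ∧ |p.1.im| < |p₀.1.im| + 1}
  have isOpen_U : IsOpen U := (isOpen_lt (by fun_prop) (by fun_prop)).and
    ((isOpen_lt (by fun_prop) (by fun_prop)).and (isOpen_lt (by fun_prop) (by fun_prop)))
  have subset : U ⊆ centredDomain ap am := fun p hp => ⟨hβ.trans hp.1, hp.2.1.trans hτ⟩
  have differentiableOn_U : DifferentiableOn ℂ (fun p => ∫ z : ℝ, centredIntegrand ap am c p z) U :=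
    differentiableOn_integral_of_dominated isOpen_U (integrable_inv_one_add_sq.const_mul C)
      (fun p hp => (continuous_centredIntegrand hap ham c (subset hp)).aestronglyMeasurable)
      (.of_forall fun z => (differentiableOn_centredIntegrand hap ham c z).mono subset)
      (.of_forall fun z p hp => hC p.1 p.2 hp.1.le hp.2.1.le hp.2.2.le z)
  exact (differentiableOn_U.differentiableAt
    (isOpen_U.mem_nhds ⟨hβp₀, hp₀τ, lt_add_one _⟩)).differentiableWithinAt

end CentredIntegral

section Extension

variable {ap am : ℝ}

/-- The holomorphic extension of `J2` to `D2`, obtained from the integral defining `J2` by the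
substitution `z ↦ z + (x₁ + x₂) / 2`. -/
noncomputable def J2ext (ap am : ℝ) (y : Fin 2 → ℝ) (p : ℂ × (Fin 2 → ℂ)) : ℂ :=
  Complex.exp (I * alphaPar ap am * ((y 0 + y 1) / 2) * (p.2 0 + p.2 1)) *
    ∫ z : ℝ, centredIntegrand ap am (alphaPar ap am * (y 0 - y 1)) (p.1, (p.2 0 - p.2 1) / 2) z

lemma differentiableOn_J2ext (hap : 0 < ap) (ham : 0 < am) (y : Fin 2 → ℝ) :
    DifferentiableOn ℂ (J2ext ap am y) (D2 ap am) := by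
  have differentiable_centre : Differentiable ℂ
      fun p : ℂ × (Fin 2 → ℂ) => (p.1, (p.2 0 - p.2 1) / 2) := by fun_prop
  have mapsTo_centre : Set.MapsTo (fun p : ℂ × (Fin 2 → ℂ) => (p.1, (p.2 0 - p.2 1) / 2))
      (D2 ap am) (centredDomain ap am) := by
    rintro ⟨b, x⟩ ⟨⟨hb, -⟩, hx⟩
    refine ⟨hb, ?_⟩
    have : ((x 0 - x 1) / 2).im = (x 0 - x 1).im / 2 := by simp
    simp only [this, abs_div, abs_two]
    linarith
  have differentiable_phase : Differentiable ℂ fun p : ℂ × (Fin 2 → ℂ) =>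
      Complex.exp (I * alphaPar ap am * ((y 0 + y 1) / 2) * (p.2 0 + p.2 1)) := by fun_prop
  exact differentiable_phase.differentiableOn.mul
    ((differentiableOn_integral_centredIntegrand hap ham _).comp
      differentiable_centre.differentiableOn mapsTo_centre)

lemma J2ext_ofReal (ap am : ℝ) (y : Fin 2 → ℝ) (b : ℂ) (x : Fin 2 → ℝ) :
    J2ext ap am y (b, fun i => (x i : ℂ)) = J2 ap am b x y := by
  rw [J2, ← integral_add_right_eq_self _ ((x 0 + x 1) / 2), J2ext, ← integral_const_mul,
    ← integral_const_mul]
  congr 1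
  funext z
  simp only [centredIntegrand, ghypRatio, Fin.prod_univ_two]
  rw [← mul_assoc, ← mul_assoc (Complex.exp _) (Complex.exp _), ← Complex.exp_add,
    ← Complex.exp_add]
  congr 1
  · congr 1
    push_cast
    ring
  · congr 3 <;> push_cast <;> ring_nf

lemma eqOn_D2_of_forall_real {f g : ℂ × (Fin 2 → ℂ) → ℂ} (hf : DifferentiableOn ℂ f (D2 ap am))
    (hg : DifferentiableOn ℂ g (D2 ap am))
    (heq : ∀ b : ℂ, 0 < b.re → b.re < ap + am → ∀ x : Fin 2 → ℝ,
      f (b, fun i => (x i : ℂ)) = g (b, fun i => (x i : ℂ))) :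
    Set.EqOn f g (D2 ap am) := by
  rintro ⟨b, x⟩ ⟨⟨hb, hb'⟩, hx⟩
  let Ω : Set (Fin 2 → ℝ) := {v | |v 0 - v 1| < ap + am - b.re}
  have isOpen_Ω : IsOpen Ω := isOpen_lt (by fun_prop) continuous_const
  have convex_Ω : Convex ℝ Ω := by
    have := (convex_ball (0 : ℝ) (ap + am - b.re)).linear_preimage
      (LinearMap.proj (R := ℝ) (φ := fun _ : Fin 2 => ℝ) 0 - LinearMap.proj 1)
    simpa [Ω, Set.preimage, Real.norm_eq_abs] using this
  have zero_mem : 0 ∈ Ω := by simpa [Ω] using hb'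
  have mapsTo : Set.MapsTo (fun x => (b, x)) (tubeDomain Ω) (D2 ap am) :=
    fun x hx => ⟨⟨hb, hb'⟩, by simpa [tubeDomain, Ω] using hx⟩
  have differentiableOn_slice {h : ℂ × (Fin 2 → ℂ) → ℂ} (hh : DifferentiableOn ℂ h (D2 ap am)) :
      DifferentiableOn ℂ (fun x => h (b, x)) (tubeDomain Ω) :=
    hh.comp (by fun_prop) mapsTo
  exact eqOn_tubeDomain_of_forall_real isOpen_Ω convex_Ω zero_mem (differentiableOn_slice hf)
    (differentiableOn_slice hg) (heq b hb hb') (by simpa [tubeDomain, Ω] using hx)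

end Extension

/-- Prop. 4.1: for fixed real `y`, `J₂(b;x,y)` has a unique holomorphic
extension to the domain `D₂`. -/
theorem statement11 (ap am : ℝ) (hap : 0 < ap) (ham : 0 < am) (y : Fin 2 → ℝ) :
    ∃ F : ℂ × (Fin 2 → ℂ) → ℂ,
      (DifferentiableOn ℂ F (D2 ap am) ∧
        ∀ b : ℂ, 0 < b.re → b.re < ap + am → ∀ x : Fin 2 → ℝ,
          F (b, fun i => (x i : ℂ)) = J2 ap am b x y) ∧
      ∀ F' : ℂ × (Fin 2 → ℂ) → ℂ,
        DifferentiableOn ℂ F' (D2 ap am) →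
        (∀ b : ℂ, 0 < b.re → b.re < ap + am → ∀ x : Fin 2 → ℝ,
          F' (b, fun i => (x i : ℂ)) = J2 ap am b x y) →
        Set.EqOn F' F (D2 ap am) := by
  refine ⟨J2ext ap am y, ⟨differentiableOn_J2ext hap ham y, fun b _ _ x =>
    J2ext_ofReal ap am y b x⟩, fun F' hF' hJ => ?_⟩
  exact eqOn_D2_of_forall_real hF' (differentiableOn_J2ext hap ham y) fun b hb hb' x =>
    (hJ b hb hb' x).trans (J2ext_ofReal ap am y b x).symm
end
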